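/- arXiv:2307.00650 — 9 statements merged into one kernel-verified Lean document; each statement's English description precedes it below -/
import Mathlib

section
/- For every β ∈ [0,1), the map x ↦ G(β,x) sends the interval [f²_m, f_m] into [f²_m, f_m]. -/
open Set

/-- Prediction-based control map `G β x = (1−β) f x + β x`. -/
noncomputable def G (f : ℝ → ℝ) (β x : ℝ) : ℝ := (1 - β) * f x + β * x

/-- for every β ∈ [0,1), the map x ↦ G(β,x) sends [f²_m, f_m] into itself. -/
theorem stmt3
    (f : ℝ → ℝ) (K : ℝ)
    (hf_cont : ContinuousOn f (Set.Ici 0))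
    (hf_nonneg : ∀ x, 0 ≤ x → 0 ≤ f x)
    (hf0 : f 0 = 0)
    (hK : 0 < K)
    (hbelow : ∀ x ∈ Set.Ioo 0 K, x < f x)
    (habove : ∀ x ∈ Set.Ioi K, 0 < f x ∧ f x < x)
    (fm f2m : ℝ)
    (hfm : IsGreatest (f '' Set.Icc 0 K) fm)
    (hfmK : K < fm)
    (hf2m : IsGLB (f '' Set.Ioo K fm) f2m)
    (β : ℝ) (hβ : β ∈ Set.Ico (0:ℝ) 1) :
    ∀ x ∈ Set.Icc f2m fm, G f β x ∈ Set.Icc f2m fm := by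
  intro x hx
  obtain ⟨hx1, hx2⟩ := hx
  obtain ⟨hb0, hb1⟩ := hβ
  have h0 : 0 ≤ f2m := by
    apply hf2m.2
    rintro _ ⟨y, hy, rfl⟩
    exact (habove y hy.1).1.le
  have hx0 : 0 ≤ x := h0.trans hx1
  have hup : f x ≤ fm := by
    rcases le_or_gt x K with h | h
    · exact hfm.2 ⟨x, ⟨hx0, h⟩, rfl⟩
    · exact (habove x h).2.le.trans hx2
  have hlow : f2m ≤ f x := by
    rcases lt_or_ge x K with h | h
    · rcases hx0.eq_or_lt with h' | h'
      · rw [← h', hf0, h']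
        exact hx1
      · exact hx1.trans (hbelow x ⟨h', h⟩).le
    · have hcl : closure (Set.Ioo K fm) = Set.Icc K fm := closure_Ioo hfmK.ne
      refine le_on_closure (f := fun _ => f2m) (g := f) (s := Set.Ioo K fm)
        (fun y hy => hf2m.1 ⟨y, hy, rfl⟩) continuousOn_const ?_ ?_
      · rw [hcl]
        exact hf_cont.mono (fun y hy => hK.le.trans hy.1)
      · rw [hcl]
        exact ⟨h, hx2⟩
  unfold G
  constructor <;> nlinarith
end

section
/- The set S := {β ∈ (0,1) : G(β,G(β,x)) > x for all x ∈ (f²_m, K) and G(β,G(β,x)) < x for all x ∈ (K, f_m)} is nonempty (in particular every β ∈ (L⁻/(L⁻+1), 1) belongs to S), so that β̲_* := inf S satisfies β̲_* < 1; moreover, for every α ∈ (β̲_*, 1) and every x₀ > 0, the sequence defined by x_{n+1} = (1−α)f(x_n) + α x_n converges to K. -/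
open Set Filter

theorem conv_aux (g : ℝ → ℝ) (K M : ℝ) (hg : ContinuousOn g (Set.Ici 0)) (hK : 0 < K)
    (hgK : g K = K) (hb : ∀ x ∈ Set.Ioo 0 K, x < g x) (ha : ∀ x, K < x → 0 < g x ∧ g x < x)
    (h2 : ∀ x, K < x → g (g x) < x) (hM : ∀ x, 0 < x → x ≤ K → g x ≤ M)
    (x : ℕ → ℝ) (hx0 : 0 < x 0) (hx : ∀ n, x (n + 1) = g (x n)) :
    Tendsto x atTop (nhds K) := by
  have hKM : K ≤ M := by have := hM K hK le_rfl; linarith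
  obtain ⟨B, hBM, hBx⟩ : ∃ B, M ≤ B ∧ x 0 ≤ B := ⟨max M (x 0), le_max_left _ _, le_max_right _ _⟩
  obtain ⟨w, hw, hwmin⟩ := (isCompact_Icc (a := K) (b := B)).exists_isMinOn
    ⟨K, le_rfl, by linarith⟩ (hg.mono (fun y hy => le_trans hK.le hy.1))
  have hwpos : 0 < g w := by
    rcases eq_or_lt_of_le hw.1 with h | h
    · rw [← h, hgK]; exact hK
    · exact (ha w h).1
  obtain ⟨c, hc0, hcx, hcw⟩ : ∃ c, 0 < c ∧ c ≤ x 0 ∧ c ≤ g w :=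
    ⟨min (x 0) (g w), lt_min hx0 hwpos, min_le_left _ _, min_le_right _ _⟩
  have hmem : ∀ n, x n ∈ Set.Icc c B := by
    intro n
    induction n with
    | zero => exact ⟨hcx, hBx⟩
    | succ n ih =>
      rw [hx]
      rcases lt_trichotomy (x n) K with h | h | h
      · have h0 : 0 < x n := lt_of_lt_of_le hc0 ih.1
        exact ⟨ih.1.trans (hb _ ⟨h0, h⟩).le, (hM _ h0 h.le).trans hBM⟩
      · rw [h, hgK, ← h]; exact ih
      · exact ⟨hcw.trans (hwmin (show x n ∈ Set.Icc K B from ⟨h.le, ih.2⟩)), (ha _ h).2.le.trans ih.2⟩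
  have hcomp : IsCompact (Set.Icc c B) := isCompact_Icc
  have hmemU : ∀ z, MapClusterPt z atTop x → z ∈ Set.Icc c B := by
    intro z hz
    have : z ∈ closure (Set.Icc c B) := by
      apply ClusterPt.mem_closure_of_mem hz
      exact Filter.mem_map.2 (Filter.univ_mem' hmem)
    rwa [isClosed_Icc.closure_eq] at this
  have hback : ∀ z, MapClusterPt z atTop x → ∃ t, MapClusterPt t atTop x ∧ g t = z := by
    intro z hz
    obtain ⟨U, hU, hUz⟩ := mapClusterPt_iff_ultrafilter.1 hz
    obtain ⟨t, ht, hUt⟩ := hcomp.ultrafilter_le_nhds' (U.map (fun n => x (n - 1)))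
      (Filter.mem_map.2 (Filter.univ_mem' (fun n : ℕ => hmem (n - 1))))
    have hUt' : Tendsto (fun n => x (n - 1)) U (nhds t) := hUt
    refine ⟨t, ?_, ?_⟩
    · refine mapClusterPt_iff_ultrafilter.2 ⟨U.map (fun n => n - 1), ?_, ?_⟩
      · exact (tendsto_sub_atTop_nat 1).mono_left hU
      · exact hUt'
    · have hct : ContinuousAt g t := hg.continuousAt (Ici_mem_nhds (lt_of_lt_of_le hc0 ht.1))
      have h1 : Tendsto (fun n => g (x (n - 1))) U (nhds (g t)) := hct.tendsto.comp hUt'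
      refine tendsto_nhds_unique (h1.congr' ?_) hUz
      have : ∀ᶠ n : ℕ in (U : Filter ℕ), 1 ≤ n := hU (eventually_ge_atTop 1)
      filter_upwards [this] with n hn
      rw [← hx, Nat.sub_add_cancel hn]
  have hcl : IsClosed {z | MapClusterPt z atTop x} := isClosed_setOfPred_clusterPt
  have hΩ : IsCompact {z | MapClusterPt z atTop x} := hcomp.of_isClosed_subset hcl hmemU
  have hne : {z | MapClusterPt z atTop x}.Nonempty := by
    obtain ⟨z, -, hz⟩ := hcomp.exists_mapClusterPt (f := atTop) (u := x)
      (Filter.le_principal_iff.2 (Filter.mem_map.2 (Filter.univ_mem' hmem)))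
    exact ⟨z, hz⟩
  obtain ⟨a, haΩ, hamin⟩ := hΩ.exists_isLeast hne
  obtain ⟨b, hbΩ, hbmax⟩ := hΩ.exists_isGreatest hne
  obtain ⟨t, htΩ, hta⟩ := hback a haΩ
  obtain ⟨s, hsΩ, hsb⟩ := hback b hbΩ
  have hapos : 0 < a := lt_of_lt_of_le hc0 (hmemU a haΩ).1
  have hat : a ≤ t := hamin htΩ
  have htb : t ≤ b := hbmax htΩ
  have has : a ≤ s := hamin hsΩ
  have hsb' : s ≤ b := hbmax hsΩ
  have haK : K ≤ a := by
    by_contra! hlt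
    have htK : K < t := by
      by_contra! h
      rcases eq_or_lt_of_le h with h | h
      · rw [h, hgK] at hta; linarith
      · have := hb t ⟨by linarith, h⟩; linarith
    have hsK : s < K := by
      by_contra! h
      rcases eq_or_lt_of_le h with h | h
      · rw [← h, hgK] at hsb; linarith
      · have := (ha s h).2; linarith
    obtain ⟨z, hz, hzs⟩ := intermediate_value_Icc' htK.le
      (hg.mono (fun y hy => le_trans hK.le hy.1)) (show s ∈ Set.Icc (g t) (g K) from
        ⟨by linarith, by linarith⟩)
    have hzK : K < z := by
      rcases eq_or_lt_of_le hz.1 with h | h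
      · rw [← h, hgK] at hzs; linarith
      · exact h
    have := h2 z hzK
    rw [hzs, hsb] at this
    linarith [hz.2]
  have hbK : b ≤ K := by
    by_contra! hlt
    rcases eq_or_lt_of_le (haK.trans has) with h | h
    · rw [← h, hgK] at hsb; linarith
    · have := (ha s h).2; linarith
  refine hcomp.tendsto_nhds_of_unique_mapClusterPt (Eventually.of_forall hmem) ?_
  intro y _ hy
  have h1 : a ≤ y := hamin hy
  have h2 : y ≤ b := hbmax hy
  linarith

/-- the set S of control values β for which G(β,·)² has no fixed point other
than K in (f²_m,f_m) is nonempty (it contains (L⁻/(L⁻+1),1)), β̲_* = inf S < 1, and every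
constant control α ∈ (β̲_*,1) stabilizes the equilibrium K globally. -/
theorem stmt7
    (f : ℝ → ℝ) (K : ℝ)
    (hf_cont : ContinuousOn f (Set.Ici 0))
    (hf_nonneg : ∀ x, 0 ≤ x → 0 ≤ f x)
    (hf0 : f 0 = 0)
    (hK : 0 < K)
    (hbelow : ∀ x ∈ Set.Ioo 0 K, x < f x)
    (habove : ∀ x ∈ Set.Ioi K, 0 < f x ∧ f x < x)
    (fm f2m : ℝ)
    (hfm : IsGreatest (f '' Set.Icc 0 K) fm)
    (hfmK : K < fm)
    (hf2m : IsGLB (f '' Set.Ioo K fm) f2m)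
    (xmax : ℝ) (hxmax_mem : xmax ∈ Set.Icc 0 K) (hxmax_val : f xmax = fm)
    (hxmax_largest : ∀ y ∈ Set.Icc 0 K, f y = fm → y ≤ xmax)
    (Lm Lp : ℝ) (hLp : 1 < Lp) (hLmLp : Lp ≤ Lm)
    (hLipL : ∀ x ∈ Set.Ioo xmax K, f x - K ≤ Lm * (K - x))
    (hLipR : ∀ x ∈ Set.Ioo K fm, K - f x ≤ Lp * (x - K)) :
    (∀ β ∈ Set.Ioo (Lm / (Lm + 1)) 1,
        β ∈ {β : ℝ | β ∈ Set.Ioo (0:ℝ) 1 ∧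
          (∀ x ∈ Set.Ioo f2m K, x < G f β (G f β x)) ∧
          (∀ x ∈ Set.Ioo K fm, G f β (G f β x) < x)}) ∧
    ({β : ℝ | β ∈ Set.Ioo (0:ℝ) 1 ∧
          (∀ x ∈ Set.Ioo f2m K, x < G f β (G f β x)) ∧
          (∀ x ∈ Set.Ioo K fm, G f β (G f β x) < x)}).Nonempty ∧
    sInf {β : ℝ | β ∈ Set.Ioo (0:ℝ) 1 ∧
          (∀ x ∈ Set.Ioo f2m K, x < G f β (G f β x)) ∧
          (∀ x ∈ Set.Ioo K fm, G f β (G f β x) < x)} < 1 ∧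
    (∀ α ∈ Set.Ioo (sInf {β : ℝ | β ∈ Set.Ioo (0:ℝ) 1 ∧
          (∀ x ∈ Set.Ioo f2m K, x < G f β (G f β x)) ∧
          (∀ x ∈ Set.Ioo K fm, G f β (G f β x) < x)}) 1,
      ∀ x : ℕ → ℝ, 0 < x 0 → (∀ n, x (n + 1) = (1 - α) * f (x n) + α * x n) →
        Tendsto x atTop (nhds K)) := by
  have hfm_le : ∀ x, 0 ≤ x → x ≤ K → f x ≤ fm := fun x h0 h1 => hfm.2 ⟨x, ⟨h0, h1⟩, rfl⟩
  have hcK : ContinuousAt f K := hf_cont.continuousAt (Ici_mem_nhds hK)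
  have hfK : f K = K := by
    apply le_antisymm
    · have h1 : Tendsto f (nhdsWithin K (Set.Ioi K)) (nhds (f K)) := hcK.tendsto.mono_left nhdsWithin_le_nhds
      have h2 : Tendsto (fun x : ℝ => x) (nhdsWithin K (Set.Ioi K)) (nhds K) :=
        tendsto_id.mono_left nhdsWithin_le_nhds
      refine le_of_tendsto_of_tendsto h1 h2 ?_
      filter_upwards [self_mem_nhdsWithin] with x hx using (habove x hx).2.le
    · have h1 : Tendsto f (nhdsWithin K (Set.Iio K)) (nhds (f K)) := hcK.tendsto.mono_left nhdsWithin_le_nhds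
      have h2 : Tendsto (fun x : ℝ => x) (nhdsWithin K (Set.Iio K)) (nhds K) :=
        tendsto_id.mono_left nhdsWithin_le_nhds
      refine le_of_tendsto_of_tendsto h2 h1 ?_
      filter_upwards [Ioo_mem_nhdsLT hK] with x hx using (hbelow x hx).le
  have hxK : xmax < K := by
    rcases eq_or_lt_of_le hxmax_mem.2 with h | h
    · rw [h, hfK] at hxmax_val; linarith
    · exact h
  have hx0 : 0 < xmax := by
    rcases eq_or_lt_of_le hxmax_mem.1 with h | h
    · rw [← h, hf0] at hxmax_val; linarith
    · exact h
  have hf2m0 : 0 ≤ f2m := by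
    apply hf2m.2
    rintro _ ⟨y, hy, rfl⟩
    exact hf_nonneg y (by linarith [hy.1])
  have hmaxL : fm - K ≤ Lm * (K - xmax) := by
    have hc : ContinuousAt f xmax := hf_cont.continuousAt (Ici_mem_nhds hx0)
    have h1 : Tendsto (fun x => f x - K) (nhdsWithin xmax (Set.Ioi xmax)) (nhds (f xmax - K)) :=
      (hc.tendsto.sub_const K).mono_left nhdsWithin_le_nhds
    have h2 : Tendsto (fun x : ℝ => Lm * (K - x)) (nhdsWithin xmax (Set.Ioi xmax))
        (nhds (Lm * (K - xmax))) :=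
      (Continuous.tendsto (by fun_prop) xmax).mono_left nhdsWithin_le_nhds
    rw [← hxmax_val]
    refine le_of_tendsto_of_tendsto h1 h2 ?_
    filter_upwards [Ioo_mem_nhdsGT hxK] with x hx using hLipL x hx
  have hLall : ∀ x ∈ Set.Ioo 0 K, f x - K ≤ Lm * (K - x) := by
    intro x hx
    rcases le_or_gt x xmax with h | h
    · have := hfm_le x hx.1.le hx.2.le
      nlinarith
    · exact hLipL x ⟨h, hx.2⟩
  -- basic facts on G
  have hGb : ∀ β, β < 1 → ∀ x ∈ Set.Ioo 0 K, x < G f β x := by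
    intro β hβ x hx
    have := hbelow x hx
    unfold G; nlinarith
  have hGa : ∀ β, β < 1 → ∀ x, K < x → G f β x < x := by
    intro β hβ x hx
    have := (habove x hx).2
    unfold G; nlinarith
  have hGK : ∀ β, G f β K = K := by
    intro β; unfold G; rw [hfK]; ring
  have hGc : ∀ β, ContinuousOn (G f β) (Set.Ici 0) := by
    intro β
    unfold G
    exact (continuousOn_const.mul hf_cont).add (continuousOn_const.mul continuousOn_id)
  have part1 : (∀ β ∈ Set.Ioo (Lm / (Lm + 1)) 1,
        β ∈ {β : ℝ | β ∈ Set.Ioo (0:ℝ) 1 ∧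
          (∀ x ∈ Set.Ioo f2m K, x < G f β (G f β x)) ∧
          (∀ x ∈ Set.Ioo K fm, G f β (G f β x) < x)}) := by
    intro β hβ
    have hLm : 0 < Lm + 1 := by linarith
    have hβ0 : 0 < β := lt_trans (div_pos (by linarith) hLm) hβ.1
    have hβL : Lm < β * (Lm + 1) := (div_lt_iff₀ hLm).1 hβ.1
    have hβ1 := hβ.2
    refine ⟨⟨hβ0, hβ1⟩, ?_, ?_⟩
    · intro x hx
      have hx' : x ∈ Set.Ioo 0 K := ⟨by linarith [hx.1], hx.2⟩
      have h1 := hGb β hβ1 x hx'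
      have h2 : G f β x < K := by
        have h3 := mul_le_mul_of_nonneg_left (hLall x hx') (show 0 ≤ 1 - β by linarith)
        have h4 : 0 < (β * (Lm + 1) - Lm) * (K - x) := mul_pos (by linarith) (by linarith [hx.2])
        unfold G; nlinarith
      exact h1.trans (hGb β hβ1 _ ⟨by linarith [hx'.1], h2⟩)
    · intro x hx
      have h1 := hGa β hβ1 x hx.1
      have h2 : K < G f β x := by
        have h3 := mul_le_mul_of_nonneg_left (hLipR x hx) (show 0 ≤ 1 - β by linarith)
        have h4 : 0 < (β * (Lm + 1) - Lm) * (x - K) := mul_pos (by linarith) (by linarith [hx.1])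
        have h5 : 0 ≤ (1 - β) * ((Lm - Lp) * (x - K)) :=
          mul_nonneg (by linarith) (mul_nonneg (by linarith) (by linarith [hx.1]))
        unfold G; nlinarith
      exact (hGa β hβ1 _ h2).trans h1
  have hlt1 : Lm / (Lm + 1) < 1 := by rw [div_lt_one (by linarith)]; linarith
  have hne : ({β : ℝ | β ∈ Set.Ioo (0:ℝ) 1 ∧
          (∀ x ∈ Set.Ioo f2m K, x < G f β (G f β x)) ∧
          (∀ x ∈ Set.Ioo K fm, G f β (G f β x) < x)}).Nonempty := by
    obtain ⟨β, h1, h2⟩ := exists_between hlt1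
    exact ⟨β, part1 β ⟨h1, h2⟩⟩
  refine ⟨part1, hne, ?_, ?_⟩
  · obtain ⟨β, hβ⟩ := hne
    refine lt_of_le_of_lt (csInf_le ⟨0, ?_⟩ hβ) hβ.1.2
    intro y hy
    exact hy.1.1.le
  · intro α hα x hx0 hx
    obtain ⟨β, ⟨⟨hβ0, hβ1⟩, -, hβR⟩, hβα⟩ := exists_lt_of_csInf_lt hne hα.1
    have hα1 := hα.2
    have hα0 : 0 < α := hβ0.trans hβα
    have hGpos : ∀ x, K < x → 0 < G f α x := by
      intro x hx
      have h1 := mul_pos (show 0 < 1 - α by linarith) (habove x hx).1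
      have h2 := mul_pos hα0 (show 0 < x by linarith)
      unfold G; linarith
    have hGM : ∀ x, 0 < x → x ≤ K → G f α x < fm := by
      intro x h0 h1
      have h2 := mul_le_mul_of_nonneg_left (hfm_le x h0.le h1) (show 0 ≤ 1 - α by linarith)
      have h3 := mul_lt_mul_of_pos_left (show x < fm by linarith) hα0
      unfold G; linarith
    refine conv_aux (G f α) K fm (hGc α) hK (hGK α) (hGb α hα1)
      (fun x hx => ⟨hGpos x hx, hGa α hα1 x hx⟩) ?_ (fun x h0 h1 => (hGM x h0 h1).le) x hx0
      (fun n => hx n)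
    intro x hx
    by_contra! hcon
    have hyx := hGa α hα1 x hx
    have hy0 := hGpos x hx
    have hyK : G f α x < K := by
      by_contra! h
      rcases eq_or_lt_of_le h with h | h
      · rw [← h, hGK] at hcon; linarith
      · have := hGa α hα1 _ h; linarith
    have hxfm : x < fm := lt_of_le_of_lt hcon (hGM _ hy0 hyK.le)
    obtain ⟨y, hy⟩ : ∃ y, y = G f α x := ⟨_, rfl⟩
    rw [← hy] at hcon hyx hy0 hyK
    have h1 : G f β x < y := by
      have := (habove x hx).2
      rw [hy]; unfold G; nlinarith
    have h2 : x < G f β y := by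
      have := hbelow y ⟨hy0, hyK⟩
      refine lt_of_le_of_lt hcon ?_
      unfold G; nlinarith
    obtain ⟨z, hz, hzy⟩ := intermediate_value_Icc' hx.le
      ((hGc β).mono (fun y hy => le_trans hK.le hy.1))
      (show y ∈ Set.Icc (G f β x) (G f β K) from ⟨h1.le, by rw [hGK]; exact hyK.le⟩)
    have hzK : K < z := by
      rcases eq_or_lt_of_le hz.1 with h | h
      · rw [← h, hGK] at hzy; linarith
      · exact h
    have := hβR z ⟨hzK, lt_of_le_of_lt hz.2 hxfm⟩
    rw [hzy] at this
    linarith [hz.2]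
end

section
/- Let β_* ∈ (β̲_*, 1), β^* ∈ (β_*, 1), let (α_n) be any sequence with α_n ∈ [β_*, β^*] for all n, and let (x_n) be defined by x_{n+1} = G(α_n, x_n) with x₀ > 0. If x_n < K for some n, then x_s > x_n for every s > n; and if x_n > K for some n, then x_s < x_n for every s > n. -/
open Set Filter

/-- under variable control α_n ∈ [β_*, β^*] ⊂ (β̲_*, 1), once a solution is
on one side of K, it stays on the corresponding side of its current value forever. -/
theorem stmt8
    (f : ℝ → ℝ) (K : ℝ)
    (hf_cont : ContinuousOn f (Set.Ici 0))
    (hf_nonneg : ∀ x, 0 ≤ x → 0 ≤ f x)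
    (hf0 : f 0 = 0)
    (hK : 0 < K)
    (hbelow : ∀ x ∈ Set.Ioo 0 K, x < f x)
    (habove : ∀ x ∈ Set.Ioi K, 0 < f x ∧ f x < x)
    (fm f2m : ℝ)
    (hfm : IsGreatest (f '' Set.Icc 0 K) fm)
    (hfmK : K < fm)
    (hf2m : IsGLB (f '' Set.Ioo K fm) f2m)
    (xmax : ℝ) (hxmax_mem : xmax ∈ Set.Icc 0 K) (hxmax_val : f xmax = fm)
    (hxmax_largest : ∀ y ∈ Set.Icc 0 K, f y = fm → y ≤ xmax)
    (Lm Lp : ℝ) (hLp : 1 < Lp) (hLmLp : Lp ≤ Lm)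
    (hLipL : ∀ x ∈ Set.Ioo xmax K, f x - K ≤ Lm * (K - x))
    (hLipR : ∀ x ∈ Set.Ioo K fm, K - f x ≤ Lp * (x - K))
    (βunder : ℝ)
    (hβunder : βunder = sInf {β : ℝ | β ∈ Set.Ioo (0:ℝ) 1 ∧
          (∀ x ∈ Set.Ioo f2m K, x < G f β (G f β x)) ∧
          (∀ x ∈ Set.Ioo K fm, G f β (G f β x) < x)})
    (βlo βhi : ℝ) (hβlo : βunder < βlo) (hβ : βlo < βhi) (hβhi : βhi < 1)
    (α : ℕ → ℝ) (hα : ∀ n, α n ∈ Set.Icc βlo βhi)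
    (x : ℕ → ℝ) (hx0 : 0 < x 0)
    (hrec : ∀ n, x (n + 1) = G f (α n) (x n)) :
    ∀ n, (x n < K → ∀ s > n, x n < x s) ∧ (K < x n → ∀ s > n, x s < x n) := by
  have hcK : ContinuousAt f K := hf_cont.continuousAt (Ici_mem_nhds hK)
  have hfK : f K = K := by
    apply le_antisymm
    · have h1 : Tendsto f (nhdsWithin K (Set.Ioi K)) (nhds (f K)) := hcK.tendsto.mono_left nhdsWithin_le_nhds
      have h2 : Tendsto (fun y : ℝ => y) (nhdsWithin K (Set.Ioi K)) (nhds K) := tendsto_id.mono_left nhdsWithin_le_nhds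
      refine le_of_tendsto_of_tendsto h1 h2 ?_
      filter_upwards [self_mem_nhdsWithin] with y hy
      exact (habove y hy).2.le
    · have h1 : Tendsto f (nhdsWithin K (Set.Iio K)) (nhds (f K)) := hcK.tendsto.mono_left nhdsWithin_le_nhds
      have h2 : Tendsto (fun y : ℝ => y) (nhdsWithin K (Set.Iio K)) (nhds K) := tendsto_id.mono_left nhdsWithin_le_nhds
      refine le_of_tendsto_of_tendsto h2 h1 ?_
      filter_upwards [Ioo_mem_nhdsLT hK] with y hy
      exact (hbelow y hy).le
  have hfle : ∀ y, 0 ≤ y → y ≤ K → f y ≤ fm := fun y h0 h1 => hfm.2 ⟨y, ⟨h0, h1⟩, rfl⟩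
  have hf2m0 : 0 ≤ f2m := by
    apply hf2m.2
    rintro _ ⟨y, hy, rfl⟩
    exact (habove y hy.1).1.le
  have hf2le : ∀ y, K < y → y < fm → f2m ≤ f y := fun y h0 h1 => hf2m.1 ⟨y, ⟨h0, h1⟩, rfl⟩
  have hfb : ∀ y, 0 < y → y ≤ K → y ≤ f y := by
    intro y h0 h1
    rcases h1.lt_or_eq with h | h
    · exact (hbelow y ⟨h0, h⟩).le
    · rw [h, hfK]
  have hfa : ∀ y, K ≤ y → f y ≤ y := by
    intro y h1
    rcases h1.lt_or_eq with h | h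
    · exact (habove y h).2.le
    · rw [← h, hfK]
  have hxK : xmax < K := by
    rcases hxmax_mem.2.lt_or_eq with h | h
    · exact h
    · rw [h, hfK] at hxmax_val; linarith
  have hne : {β : ℝ | β ∈ Set.Ioo (0:ℝ) 1 ∧
          (∀ x ∈ Set.Ioo f2m K, x < G f β (G f β x)) ∧
          (∀ x ∈ Set.Ioo K fm, G f β (G f β x) < x)}.Nonempty := by
    obtain ⟨e, he0, he1, he2, he3⟩ : ∃ e : ℝ, 0 < e ∧ e < 1 ∧ e * (1 + Lm) ≤ 1 ∧
        e * (fm - xmax) ≤ K - xmax := by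
      have a1 : 0 < 1 + Lm := by linarith
      have a2 : 0 < fm - xmax := by linarith
      refine ⟨min (1 / (1 + Lm)) ((K - xmax) / (fm - xmax)), ?_, ?_, ?_, ?_⟩
      · exact lt_min (by positivity) (div_pos (by linarith) a2)
      · apply min_lt_of_left_lt
        rw [div_lt_one a1]; linarith
      · rw [← le_div_iff₀ a1]; exact min_le_left _ _
      · rw [← le_div_iff₀ a2]; exact min_le_right _ _
    refine ⟨1 - e, ⟨by linarith, by linarith⟩, ?_, ?_⟩
    · intro y hy
      have hy0 : 0 < y := lt_of_le_of_lt hf2m0 hy.1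
      have g1 : y < G f (1 - e) y := by
        have := hbelow y ⟨hy0, hy.2⟩
        unfold G; nlinarith
      have g2 : G f (1 - e) y ≤ K := by
        unfold G
        rcases le_or_gt y xmax with h | h
        · have := hfle y hy0.le hy.2.le
          nlinarith
        · have := hLipL y ⟨h, hy.2⟩
          have h3 : 0 < K - y := by linarith [hy.2]
          nlinarith
      have g3 := hfb _ (hy0.trans g1) g2
      generalize G f (1 - e) y = z at *
      unfold G; nlinarith
    · intro y hy
      have g1 : G f (1 - e) y < y := by
        have := (habove y hy.1).2
        unfold G; nlinarith
      have g2 : K ≤ G f (1 - e) y := by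
        unfold G
        have := hLipR y hy
        have h3 : 0 < y - K := by linarith [hy.1]
        have h4 : e * (1 + Lp) ≤ 1 := by nlinarith
        nlinarith
      have g3 := hfa _ g2
      generalize G f (1 - e) y = z at *
      unfold G; nlinarith
  rw [hβunder] at hβlo
  obtain ⟨b, ⟨⟨hb0, hb1⟩, hbL, hbR⟩, hblo⟩ := exists_lt_of_csInf_lt hne hβlo
  have hcG : ContinuousOn (G f b) (Set.Ici 0) := by
    unfold G; fun_prop
  have hGK : ∀ a, G f a K = K := by intro a; unfold G; rw [hfK]; ring
  have hGfm : ∀ y, 0 < y → y < K → G f b y < fm := by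
    intro y h0 h1
    have := hfle y h0.le h1.le
    unfold G; nlinarith
  have clA : ∀ w y, 0 < w → w < K → K < y → y ≤ G f b w → w < G f b y := by
    intro w y hw0 hwK hy hyw
    rcases le_or_gt w f2m with h | h
    · have := hf2le y hy (lt_of_le_of_lt hyw (hGfm w hw0 hwK))
      unfold G; nlinarith
    · obtain ⟨w', hw', he⟩ := intermediate_value_Icc' hwK.le
        (hcG.mono (fun t ht => hw0.le.trans ht.1)) (show y ∈ Set.Icc (G f b K) (G f b w) from
          ⟨by rw [hGK]; exact hy.le, hyw⟩)
      have hne' : w' ≠ K := by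
        rintro rfl; rw [hGK] at he; linarith
      have := hbL w' ⟨by linarith [hw'.1], lt_of_le_of_ne hw'.2 hne'⟩
      rw [he] at this
      linarith [hw'.1]
  have clB : ∀ w y, K < w → 0 < y → y < K → G f b w ≤ y → G f b y < w := by
    intro w y hwK hy0 hy hyw
    rcases le_or_gt fm w with h | h
    · exact lt_of_lt_of_le (hGfm y hy0 hy) h
    · obtain ⟨w', hw', he⟩ := intermediate_value_Icc' hwK.le
        (hcG.mono (fun t ht => hK.le.trans ht.1)) (show y ∈ Set.Icc (G f b w) (G f b K) from
          ⟨hyw, by rw [hGK]; exact hy.le⟩)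
      have hne' : K ≠ w' := by
        rintro rfl; rw [hGK] at he; linarith
      have := hbR w' ⟨lt_of_le_of_ne hw'.1 hne', by linarith [hw'.2]⟩
      rw [he] at this
      linarith [hw'.2]
  have hα1 : ∀ n, b < α n ∧ α n < 1 := fun n =>
    ⟨lt_of_lt_of_le hblo (hα n).1, lt_of_le_of_lt (hα n).2 hβhi⟩
  have hpos : ∀ n, 0 < x n := by
    intro n
    induction n with
    | zero => exact hx0
    | succ k ih =>
      rw [hrec]
      have h1 := hf_nonneg _ ih.le
      have h2 := hα1 k
      have h3 : 0 < α k * x k := mul_pos (by linarith) ih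
      have h4 : 0 ≤ (1 - α k) * f (x k) := mul_nonneg (by linarith) h1
      unfold G; linarith
  have up : ∀ s, x s < K → x s < x (s+1) ∧ x (s+1) ≤ G f b (x s) := by
    intro s h
    have h1 := hbelow _ ⟨hpos s, h⟩
    have h2 := hα1 s
    rw [hrec]
    unfold G
    constructor <;> nlinarith
  have dn : ∀ s, K < x s → x (s+1) < x s ∧ G f b (x s) ≤ x (s+1) := by
    intro s h
    have h1 := (habove _ h).2
    have h2 := hα1 s
    rw [hrec]
    unfold G
    constructor <;> nlinarith
  have eqK : ∀ s, x s = K → x (s+1) = K := by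
    intro s h
    rw [hrec, h, hGK]
  intro n
  constructor
  · intro hn s hs
    have key : ∀ s, n + 1 ≤ s → x n < x s ∧
        (K < x s → ∃ w, x n ≤ w ∧ w < K ∧ x s ≤ G f b w) := by
      intro s hs
      induction s, hs using Nat.le_induction with
      | base => exact ⟨(up n hn).1, fun _ => ⟨x n, le_rfl, hn, (up n hn).2⟩⟩
      | succ s hs ih =>
        rcases lt_trichotomy (x s) K with h | h | h
        · exact ⟨ih.1.trans (up s h).1, fun _ => ⟨x s, ih.1.le, h, (up s h).2⟩⟩
        · rw [eqK s h]
          exact ⟨hn, fun h => absurd h (lt_irrefl _)⟩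
        · obtain ⟨w, h1, h2, h3⟩ := ih.2 h
          have := clA w (x s) ((hpos n).trans_le h1) h2 h h3
          have hd := dn s h
          exact ⟨by linarith, fun _ => ⟨w, h1, h2, by linarith⟩⟩
    exact (key s hs).1
  · intro hn s hs
    have key : ∀ s, n + 1 ≤ s → x s < x n ∧
        (x s < K → ∃ w, w ≤ x n ∧ K < w ∧ G f b w ≤ x s) := by
      intro s hs
      induction s, hs using Nat.le_induction with
      | base => exact ⟨(dn n hn).1, fun _ => ⟨x n, le_rfl, hn, (dn n hn).2⟩⟩
      | succ s hs ih =>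
        rcases lt_trichotomy (x s) K with h | h | h
        · obtain ⟨w, h1, h2, h3⟩ := ih.2 h
          have := clB w (x s) h2 (hpos s) h h3
          have hd := up s h
          exact ⟨by linarith, fun _ => ⟨w, h1, h2, by linarith⟩⟩
        · rw [eqK s h]
          exact ⟨hn, fun h => absurd h (lt_irrefl _)⟩
        · exact ⟨(dn s h).1.trans ih.1, fun _ => ⟨x s, ih.1.le, h, (dn s h).2⟩⟩
    exact (key s hs).1
end

section
/- Let β_* ∈ (β̲_*, 1), β^* ∈ (β_*, 1), let (α_n) be any sequence with α_n ∈ [β_*, β^*] for all n, and let (x_n) be defined by x_{n+1} = G(α_n, x_n) with x₀ > 0. Then x_n → K as n → ∞. -/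
open Set Filter

set_option maxHeartbeats 2000000 in
/-- under variable control α_n ∈ [β_*, β^*] ⊂ (β̲_*, 1), any solution with a
positive initial value converges to K. -/
theorem stmt9
    (f : ℝ → ℝ) (K : ℝ)
    (hf_cont : ContinuousOn f (Set.Ici 0))
    (hf_nonneg : ∀ x, 0 ≤ x → 0 ≤ f x)
    (hf0 : f 0 = 0)
    (hK : 0 < K)
    (hbelow : ∀ x ∈ Set.Ioo 0 K, x < f x)
    (habove : ∀ x ∈ Set.Ioi K, 0 < f x ∧ f x < x)
    (fm f2m : ℝ)
    (hfm : IsGreatest (f '' Set.Icc 0 K) fm)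
    (hfmK : K < fm)
    (hf2m : IsGLB (f '' Set.Ioo K fm) f2m)
    (xmax : ℝ) (hxmax_mem : xmax ∈ Set.Icc 0 K) (hxmax_val : f xmax = fm)
    (hxmax_largest : ∀ y ∈ Set.Icc 0 K, f y = fm → y ≤ xmax)
    (Lm Lp : ℝ) (hLp : 1 < Lp) (hLmLp : Lp ≤ Lm)
    (hLipL : ∀ x ∈ Set.Ioo xmax K, f x - K ≤ Lm * (K - x))
    (hLipR : ∀ x ∈ Set.Ioo K fm, K - f x ≤ Lp * (x - K))
    (βunder : ℝ)
    (hβunder : βunder = sInf {β : ℝ | β ∈ Set.Ioo (0:ℝ) 1 ∧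
          (∀ x ∈ Set.Ioo f2m K, x < G f β (G f β x)) ∧
          (∀ x ∈ Set.Ioo K fm, G f β (G f β x) < x)})
    (βlo βhi : ℝ) (hβlo : βunder < βlo) (hβ : βlo < βhi) (hβhi : βhi < 1)
    (α : ℕ → ℝ) (hα : ∀ n, α n ∈ Set.Icc βlo βhi)
    (x : ℕ → ℝ) (hx0 : 0 < x 0)
    (hrec : ∀ n, x (n + 1) = G f (α n) (x n)) :
    Tendsto x atTop (nhds K) := by
  -- basic facts
  have hcK : ContinuousWithinAt f (Ici 0) K := hf_cont K hK.le
  have hfK : f K = K := by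
    have hc : ContinuousAt f K := hcK.continuousAt (Ici_mem_nhds hK)
    apply le_antisymm
    · have h1 : Tendsto f (nhdsWithin K (Ioi K)) (nhds (f K)) := hc.tendsto.mono_left nhdsWithin_le_nhds
      have h2 : Tendsto (fun y : ℝ => y) (nhdsWithin K (Ioi K)) (nhds K) := tendsto_id.mono_left nhdsWithin_le_nhds
      refine le_of_tendsto_of_tendsto h1 h2 ?_
      filter_upwards [self_mem_nhdsWithin] with y hy
      exact (habove y hy).2.le
    · have h1 : Tendsto f (nhdsWithin K (Iio K)) (nhds (f K)) := hc.tendsto.mono_left nhdsWithin_le_nhds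
      have h2 : Tendsto (fun y : ℝ => y) (nhdsWithin K (Iio K)) (nhds K) := tendsto_id.mono_left nhdsWithin_le_nhds
      refine le_of_tendsto_of_tendsto h2 h1 ?_
      filter_upwards [self_mem_nhdsWithin, mem_nhdsWithin_of_mem_nhds (Ioi_mem_nhds hK)] with y hy hy'
      exact (hbelow y ⟨hy', hy⟩).le
  have hfle : ∀ y ∈ Icc 0 K, f y ≤ fm := fun y hy => hfm.2 ⟨y, hy, rfl⟩
  have hf2 : ∀ y ∈ Ioo K fm, f2m ≤ f y := fun y hy => hf2m.1 ⟨y, hy, rfl⟩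
  have hf2K : f2m ≤ K := by
    have hne : (nhdsWithin K (Ioi K)).NeBot := inferInstance
    have h2 : Tendsto (fun y : ℝ => y) (nhdsWithin K (Ioi K)) (nhds K) := tendsto_id.mono_left nhdsWithin_le_nhds
    refine ge_of_tendsto h2 ?_
    filter_upwards [Ioo_mem_nhdsGT hfmK] with y hy
    exact (hf2 y hy).trans (habove y hy.1).2.le
  have hf20 : 0 ≤ f2m := by
    apply hf2m.2
    rintro _ ⟨y, hy, rfl⟩
    exact (habove y hy.1).1.le
  have hxK : xmax < K := by
    rcases hxmax_mem.2.lt_or_eq with h | h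
    · exact h
    · rw [h, hfK] at hxmax_val; linarith
  have hL1 : fm - K ≤ Lm * (K - xmax) := by
    have hc : Tendsto f (nhdsWithin xmax (Ioi xmax)) (nhds (f xmax)) :=
      (hf_cont xmax hxmax_mem.1).mono_left (nhdsWithin_mono _ (fun y hy => hxmax_mem.1.trans (le_of_lt hy)))
    have h1 : Tendsto (fun y => f y - K) (nhdsWithin xmax (Ioi xmax)) (nhds (f xmax - K)) := hc.sub_const K
    have h2 : Tendsto (fun y : ℝ => Lm * (K - y)) (nhdsWithin xmax (Ioi xmax)) (nhds (Lm * (K - xmax))) := by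
      apply Tendsto.mono_left _ nhdsWithin_le_nhds
      apply Continuous.tendsto
      fun_prop
    rw [← hxmax_val]
    refine le_of_tendsto_of_tendsto h1 h2 ?_
    filter_upwards [Ioo_mem_nhdsGT hxK] with y hy
    exact hLipL y hy
  have hLm : 0 < Lm := by linarith
  have hL2 : ∀ y ∈ Ioo 0 K, f y - K ≤ Lm * (K - y) := by
    intro y hy
    rcases lt_or_ge xmax y with h | h
    · exact hLipL y ⟨h, hy.2⟩
    · have := hfle y ⟨hy.1.le, hy.2.le⟩
      nlinarith
  have hGK : ∀ b, G f b K = K := by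
    intro b; unfold G; rw [hfK]; ring
  have hGlow : ∀ b < 1, ∀ y ∈ Ioo 0 K, y < G f b y := by
    intro b hb y hy
    have := hbelow y hy
    unfold G; nlinarith
  have hGup : ∀ b < 1, ∀ y, K < y → G f b y < y := by
    intro b hb y hy
    have := (habove y hy).2
    unfold G; nlinarith
  -- the set is nonempty
  obtain ⟨β, ⟨⟨hβ0, hβ1⟩, hS1, hS2⟩, hββ⟩ : ∃ β ∈ {β : ℝ | β ∈ Set.Ioo (0:ℝ) 1 ∧
          (∀ x ∈ Set.Ioo f2m K, x < G f β (G f β x)) ∧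
          (∀ x ∈ Set.Ioo K fm, G f β (G f β x) < x)}, β < βlo := by
    rw [hβunder] at hβlo
    refine exists_lt_of_csInf_lt ?_ hβlo
    have hb : (1 - Lm / (1 + Lm)) * Lm = Lm / (1 + Lm) := by field_simp; ring
    have hb0 : 0 < Lm / (1 + Lm) := by positivity
    have hb1 : Lm / (1 + Lm) < 1 := by rw [div_lt_one (by positivity)]; linarith
    refine ⟨Lm / (1 + Lm), ⟨hb0, hb1⟩, ?_, ?_⟩
    · generalize Lm / (1 + Lm) = b at *
      intro y hy
      have hy0 : y ∈ Ioo 0 K := ⟨hf20.trans_lt hy.1, hy.2⟩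
      have h1 := hGlow b hb1 y hy0
      have h2 : G f b y ≤ K := by
        have := mul_le_mul_of_nonneg_left (hL2 y hy0) (sub_nonneg.2 hb1.le)
        rw [← mul_assoc, hb] at this
        unfold G; linarith
      rcases h2.lt_or_eq with h | h
      · exact h1.trans (hGlow b hb1 _ ⟨hy0.1.trans h1, h⟩)
      · rw [h, hGK]; exact hy.2
    · generalize Lm / (1 + Lm) = b at *
      intro y hy
      have h1 := hGup b hb1 y hy.1
      have h2 : K ≤ G f b y := by
        have h3 : K - f y ≤ Lm * (y - K) := by
          have := hLipR y hy
          have := hy.1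
          nlinarith
        have := mul_le_mul_of_nonneg_left h3 (sub_nonneg.2 hb1.le)
        rw [← mul_assoc, hb] at this
        unfold G; linarith
      rcases h2.lt_or_eq with h | h
      · exact (hGup b hb1 _ h).trans h1
      · rw [← h, hGK]; exact hy.1
  -- bounds
  obtain ⟨B, hBx, hBf⟩ : ∃ B, x 0 ≤ B ∧ fm ≤ B := ⟨max (x 0) fm, le_max_left _ _, le_max_right _ _⟩
  obtain ⟨c, hc0, hcx, hcK', hcf⟩ : ∃ c, 0 < c ∧ c ≤ x 0 ∧ c ≤ K ∧ ∀ y ∈ Icc K B, c ≤ f y := by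
    obtain ⟨p, hp, hpm⟩ := (isCompact_Icc (a := K) (b := B)).exists_isMinOn
      (nonempty_Icc.2 (hfmK.le.trans hBf)) (hf_cont.mono (fun y hy => hK.le.trans hy.1))
    have hp0 : 0 < f p := by
      rcases hp.1.eq_or_lt with h | h
      · rw [← h, hfK]; exact hK
      · exact (habove p h).1
    refine ⟨min (min (x 0) K) (f p), by simp [hx0, hK, hp0], (min_le_left _ _).trans (min_le_left _ _),
      (min_le_left _ _).trans (min_le_right _ _), fun y hy => (min_le_right _ _).trans (hpm hy)⟩
  have hxb : ∀ n, x n ∈ Icc c B := by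
    intro n
    induction n with
    | zero => exact ⟨hcx, hBx⟩
    | succ n ih =>
      rw [hrec]
      obtain ⟨ha1, ha2⟩ := hα n
      have h0 : 0 < x n := hc0.trans_le ih.1
      rcases lt_trichotomy (x n) K with h | h | h
      · have h1 := hGlow (α n) (by linarith) (x n) ⟨h0, h⟩
        refine ⟨ih.1.trans h1.le, ?_⟩
        have := hfle (x n) ⟨h0.le, h.le⟩
        have := ih.2
        unfold G; nlinarith
      · rw [h, hGK]; exact ⟨hcK', hfmK.le.trans hBf⟩
      · have h1 := hGup (α n) (by linarith) (x n) h
        refine ⟨?_, h1.le.trans ih.2⟩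
        have := hcf (x n) ⟨h.le, ih.2⟩
        have := ih.1
        unfold G; nlinarith
  -- cluster points
  have hCb : ∀ p, MapClusterPt p atTop x → p ∈ Icc c B := by
    intro p hp
    exact isClosed_Icc.mem_of_mapClusterPt hp (Eventually.of_forall hxb)
  have hback : ∀ p, MapClusterPt p atTop x → ∃ q, MapClusterPt q atTop x ∧
      ∃ δ ∈ Icc βlo βhi, p = G f δ q := by
    intro p hp
    obtain ⟨ψ, hψ, hψt⟩ := MapClusterPt.tendsto_subseq hp
    let ν : ℕ → ℕ := fun k => ψ (k + 1) - 1
    have hν : ∀ k, ν k + 1 = ψ (k + 1) := by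
      intro k
      have := hψ.id_le (k + 1)
      simp only [id] at this
      simp only [ν]; omega
    have hνt : Tendsto ν atTop atTop := by
      refine tendsto_atTop_mono (f := fun k => k) ?_ tendsto_id
      intro k
      have := hψ.id_le (k + 1)
      simp only [id] at this
      have := hν k
      omega
    obtain ⟨⟨q, δ⟩, hqδ, φ, hφ, hφt⟩ := ((isCompact_Icc (a := c) (b := B)).prod
      (isCompact_Icc (a := βlo) (b := βhi))).tendsto_subseq
      (x := fun k => (x (ν k), α (ν k))) (fun k => ⟨hxb _, hα _⟩)
    have hq : Tendsto (fun k => x (ν (φ k))) atTop (nhds q) := (continuous_fst.tendsto _).comp hφt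
    have hd : Tendsto (fun k => α (ν (φ k))) atTop (nhds δ) := (continuous_snd.tendsto _).comp hφt
    refine ⟨q, ?_, δ, hqδ.2, ?_⟩
    · exact MapClusterPt.of_comp (hνt.comp hφ.tendsto_atTop) hq.mapClusterPt
    · have hfq : Tendsto (fun k => f (x (ν (φ k)))) atTop (nhds (f q)) := by
        have hcq : ContinuousWithinAt f (Ici 0) q := hf_cont q (hc0.le.trans hqδ.1.1)
        exact hcq.tendsto.comp (tendsto_nhdsWithin_iff.2
          ⟨hq, Eventually.of_forall fun k => hc0.le.trans (hxb _).1⟩)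
      have h1 : Tendsto (fun k => x (ν (φ k) + 1)) atTop (nhds (G f δ q)) := by
        simp only [hrec]
        unfold G
        exact ((tendsto_const_nhds.sub hd).mul hfq).add (hd.mul hq)
      have h2 : Tendsto (fun k => x (ν (φ k) + 1)) atTop (nhds p) := by
        simp only [hν]
        exact hψt.comp ((tendsto_add_atTop_nat 1).comp hφ.tendsto_atTop)
      exact tendsto_nhds_unique h2 h1
  have hCc : IsCompact {p | MapClusterPt p atTop x} :=
    (isCompact_Icc (a := c) (b := B)).of_isClosed_subset isClosed_setOfPred_clusterPt hCb
  have hCn : {p | MapClusterPt p atTop x}.Nonempty := by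
    obtain ⟨p, _, hp⟩ := (isCompact_Icc (a := c) (b := B)).exists_mapClusterPt
      (f := atTop) (u := x) (tendsto_principal.2 (Eventually.of_forall hxb))
    exact ⟨p, hp⟩
  obtain ⟨m, hmC, hm⟩ := hCc.exists_isLeast hCn
  obtain ⟨M, hMC, hM⟩ := hCc.exists_isGreatest hCn
  have key : m = K ∧ M = K := by
    obtain ⟨y, hyC, δ, hδ, hmy⟩ := hback m hmC
    obtain ⟨z, hzC, δ', hδ', hMz⟩ := hback M hMC
    have hmy' : m ≤ y := hm hyC
    have hyM : y ≤ M := hM hyC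
    have hmz : m ≤ z := hm hzC
    have hzM : z ≤ M := hM hzC
    have hm0 : 0 < m := hc0.trans_le (hCb m hmC).1
    obtain ⟨hδ1, hδ2⟩ := hδ
    obtain ⟨hδ1', hδ2'⟩ := hδ'
    have hzK : z ≤ K := by
      by_contra! h
      have := hGup δ' (by linarith) z h
      linarith
    have hMfm : M < fm := by
      have := hfle z ⟨(hm0.trans_le hmz).le, hzK⟩
      rw [hMz]; unfold G; nlinarith
    have hyK : K ≤ y := by
      by_contra! h
      have := hGlow δ (by linarith) y ⟨hm0.trans_le hmy', h⟩
      linarith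
    rcases hyK.eq_or_lt with h | h
    · rw [← h, hGK] at hmy
      have : z = K := le_antisymm hzK (hmy ▸ hmz)
      rw [this, hGK] at hMz
      exact ⟨hmy, hMz⟩
    · exfalso
      have hzK' : z < K := by
        rcases hzK.lt_or_eq with h' | h'
        · exact h'
        · rw [h', hGK] at hMz; linarith
      have hmf : f2m < m := by
        have := hf2 y ⟨h, by linarith⟩
        rw [hmy]; unfold G; nlinarith
      have hMβ : M ≤ G f β z := by
        have := hbelow z ⟨by linarith, hzK'⟩
        rw [hMz]; unfold G; nlinarith
      have hcont : ContinuousOn (G f β) (Icc z K) := by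
        have : ContinuousOn f (Icc z K) := hf_cont.mono (fun w hw => (hm0.le.trans hmz).trans hw.1)
        unfold G
        fun_prop
      obtain ⟨w, hw, hwy⟩ := intermediate_value_Icc' hzK'.le hcont
        (show y ∈ Icc (G f β K) (G f β z) from ⟨by rw [hGK]; exact h.le, hyM.trans hMβ⟩)
      have hwK : w < K := by
        rcases hw.2.lt_or_eq with h' | h'
        · exact h'
        · rw [h', hGK] at hwy; linarith
      have h3 := hS1 w ⟨by linarith [hw.1], hwK⟩
      rw [hwy] at h3
      have h4 : G f β y ≤ G f δ y := by
        have h5 := mul_nonneg (sub_nonneg.2 (hββ.le.trans hδ1)) (sub_nonneg.2 (habove y h).2.le)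
        unfold G; linarith
      linarith [hw.1]
  refine (isCompact_Icc (a := c) (b := B)).tendsto_nhds_of_unique_mapClusterPt
    (Eventually.of_forall hxb) ?_
  intro p _ hp
  exact le_antisymm (key.2 ▸ hM hp) (key.1 ▸ hm hp)
end

section
/- Let β_* ∈ (β̲_*, 1) and β^* ∈ (β_*, 1). Then for every x₀ > 0 and every δ > 0 there exists S₁ ∈ ℕ, depending only on x₀, β_*, β^* and δ, such that for every sequence (α_n) with α_n ∈ [β_*, β^*] for all n, the sequence defined by x_{n+1} = G(α_n, x_n) satisfies x_n ∈ (K−δ, K+δ) for all n ≥ S₁. -/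
open Set Filter

lemma nested_aux (Φ : ℝ × ℝ → ℝ) (T : Set ℝ) (hT : IsCompact T) (D : ℕ → Set ℝ)
    (hD : ∀ n, IsCompact (D n)) (hanti : ∀ n, D (n+1) ⊆ D n)
    (hstep : ∀ n, D (n+1) = Φ '' (T ×ˢ D n))
    (hΦ : ContinuousOn Φ (T ×ˢ D 0)) (a : ℝ) (ha : a ∈ ⋂ n, D n) :
    ∃ α ∈ T, ∃ x ∈ ⋂ n, D n, Φ (α, x) = a := by
  have hmono : Antitone D := antitone_nat_of_succ_le hanti
  have hc : ∀ n, IsCompact ((T ×ˢ D n) ∩ Φ ⁻¹' {a}) := by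
    intro n
    have h1 : IsCompact (T ×ˢ D n) := hT.prod (hD n)
    have h2 : ContinuousOn Φ (T ×ˢ D n) := hΦ.mono (Set.prod_mono le_rfl (hmono (Nat.zero_le n)))
    have h3 := h2.preimage_isClosed_of_isClosed h1.isClosed (isClosed_singleton (x := a))
    exact h1.of_isClosed_subset h3 Set.inter_subset_left
  have hne := IsCompact.nonempty_iInter_of_sequence_nonempty_isCompact_isClosed
    (fun n => (T ×ˢ D n) ∩ Φ ⁻¹' {a})
    (fun n => Set.inter_subset_inter_left _ (Set.prod_mono le_rfl (hanti n)))
    (by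
      intro n
      have := Set.mem_iInter.1 ha (n+1)
      rw [hstep] at this
      obtain ⟨p, hp, hpa⟩ := this
      exact ⟨p, hp, hpa⟩) (hc 0) (fun n => (hc n).isClosed)
  obtain ⟨⟨α, x⟩, hp⟩ := hne
  have hp' := fun n => Set.mem_iInter.1 hp n
  exact ⟨α, (hp' 0).1.1, x, Set.mem_iInter.2 (fun n => (hp' n).1.2), (hp' 0).2⟩

set_option maxHeartbeats 1000000 in
/-- under variable control α_n ∈ [β_*, β^*] ⊂ (β̲_*, 1), the solution enters
the δ-neighbourhood of K in a finite number of steps S₁ depending only on x₀, β_*, β^*, δ,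
and remains there. -/
theorem stmt10
    (f : ℝ → ℝ) (K : ℝ)
    (hf_cont : ContinuousOn f (Set.Ici 0))
    (hf_nonneg : ∀ x, 0 ≤ x → 0 ≤ f x)
    (hf0 : f 0 = 0)
    (hK : 0 < K)
    (hbelow : ∀ x ∈ Set.Ioo 0 K, x < f x)
    (habove : ∀ x ∈ Set.Ioi K, 0 < f x ∧ f x < x)
    (fm f2m : ℝ)
    (hfm : IsGreatest (f '' Set.Icc 0 K) fm)
    (hfmK : K < fm)
    (hf2m : IsGLB (f '' Set.Ioo K fm) f2m)
    (xmax : ℝ) (hxmax_mem : xmax ∈ Set.Icc 0 K) (hxmax_val : f xmax = fm)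
    (hxmax_largest : ∀ y ∈ Set.Icc 0 K, f y = fm → y ≤ xmax)
    (Lm Lp : ℝ) (hLp : 1 < Lp) (hLmLp : Lp ≤ Lm)
    (hLipL : ∀ x ∈ Set.Ioo xmax K, f x - K ≤ Lm * (K - x))
    (hLipR : ∀ x ∈ Set.Ioo K fm, K - f x ≤ Lp * (x - K))
    (βunder : ℝ)
    (hβunder : βunder = sInf {β : ℝ | β ∈ Set.Ioo (0:ℝ) 1 ∧
          (∀ x ∈ Set.Ioo f2m K, x < G f β (G f β x)) ∧
          (∀ x ∈ Set.Ioo K fm, G f β (G f β x) < x)})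
    (βlo βhi : ℝ) (hβlo : βunder < βlo) (hβ : βlo < βhi) (hβhi : βhi < 1)
    (x₀ : ℝ) (hx₀ : 0 < x₀) (δ : ℝ) (hδ : 0 < δ) :
    ∃ S₁ : ℕ, ∀ α : ℕ → ℝ, (∀ n, α n ∈ Set.Icc βlo βhi) →
      ∀ x : ℕ → ℝ, x 0 = x₀ → (∀ n, x (n + 1) = G f (α n) (x n)) →
        ∀ n ≥ S₁, x n ∈ Set.Ioo (K - δ) (K + δ) := by
  have hGdef : ∀ β x, G f β x = (1 - β) * f x + β * x := fun _ _ => rfl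
  -- f K = K
  have hfK : f K = K := by
    apply le_antisymm
    · have hc : ContinuousWithinAt f (Set.Ioi K) K :=
        (hf_cont K hK.le).mono (fun y hy => (hK.trans hy).le)
      exact ContinuousWithinAt.closure_le (by rw [closure_Ioi]; exact Set.self_mem_Ici) hc
        continuousWithinAt_id (fun y hy => (habove y hy).2.le)
    · have hc : ContinuousWithinAt f (Set.Ioo 0 K) K :=
        (hf_cont K hK.le).mono (fun y hy => hy.1.le)
      exact ContinuousWithinAt.closure_le (by rw [closure_Ioo hK.ne]; exact ⟨hK.le, le_rfl⟩)
        continuousWithinAt_id hc (fun y hy => (hbelow y hy).le)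
  have hfle : ∀ x, 0 ≤ x → x ≤ K → x ≤ f x := by
    intro x h0 h1
    rcases h1.eq_or_lt with h | h
    · rw [h, hfK]
    · rcases h0.eq_or_lt with h' | h'
      · rw [← h', hf0]
      · exact (hbelow x ⟨h', h⟩).le
  have hfge : ∀ x, K ≤ x → f x ≤ x := by
    intro x h1
    rcases h1.eq_or_lt with h | h
    · rw [← h, hfK]
    · exact (habove x h).2.le
  have hfmax : ∀ x, 0 ≤ x → x ≤ K → f x ≤ fm := fun x h0 h1 => hfm.2 ⟨x, ⟨h0, h1⟩, rfl⟩
  have hf2m0 : 0 ≤ f2m := hf2m.2 (by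
    rintro _ ⟨x, hx, rfl⟩
    exact hf_nonneg x (hK.trans hx.1).le)
  have hxK : xmax < K := by
    refine lt_of_le_of_ne hxmax_mem.2 ?_
    rintro h
    rw [h, hfK] at hxmax_val
    exact hfmK.ne hxmax_val
  -- nonempty set
  obtain ⟨β0, ⟨⟨hβ00, hβ01⟩, hB1, -⟩, hβ0lo⟩ : ∃ β0 ∈ {β : ℝ | β ∈ Set.Ioo (0:ℝ) 1 ∧
          (∀ x ∈ Set.Ioo f2m K, x < G f β (G f β x)) ∧
          (∀ x ∈ Set.Ioo K fm, G f β (G f β x) < x)}, β0 < βlo := by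
    rw [hβunder] at hβlo
    refine exists_lt_of_csInf_lt ?_ hβlo
    obtain ⟨ε, hε0, hε1, hεL, hεx⟩ : ∃ ε : ℝ, 0 < ε ∧ ε < 1 ∧ ε * (Lm + 1) ≤ 1 ∧
        ε * (fm - xmax) ≤ K - xmax := by
      have hx1 : 0 < fm - xmax := by linarith
      have hx2 : 0 < Lm + 1 := by linarith
      have hx3 : 0 < K - xmax := by linarith
      refine ⟨min (1 / (Lm + 1)) ((K - xmax) / (fm - xmax)), by positivity, ?_, ?_, ?_⟩
      · refine (min_le_left _ _).trans_lt ?_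
        rw [div_lt_one hx2]; linarith
      · rw [← le_div_iff₀ hx2]; exact min_le_left _ _
      · rw [← le_div_iff₀ hx1]; exact min_le_right _ _
    refine ⟨1 - ε, ⟨by linarith, by linarith⟩, ?_, ?_⟩
    · intro x hx
      have hx0 : 0 < x := hf2m0.trans_lt hx.1
      have hfx := hbelow x ⟨hx0, hx.2⟩
      have h1 : x < G f (1 - ε) x := by rw [hGdef]; nlinarith
      have h2 : G f (1 - ε) x ≤ K := by
        rw [hGdef]
        rcases lt_or_ge xmax x with h | h
        · have := hLipL x ⟨h, hx.2⟩
          have h3 := mul_le_mul_of_nonneg_left this hε0.le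
          have h4 : ε * (Lm + 1) * (K - x) ≤ 1 * (K - x) :=
            mul_le_mul_of_nonneg_right hεL (by linarith [hx.2])
          nlinarith
        · have h3 := mul_le_mul_of_nonneg_left (hfmax x hx0.le hx.2.le) hε0.le
          have h4 : (1 - ε) * x ≤ (1 - ε) * xmax :=
            mul_le_mul_of_nonneg_left h (by linarith)
          nlinarith
      have h3 := hfle _ (hx0.trans h1).le h2
      rw [hGdef (1 - ε) (G f (1 - ε) x)]
      nlinarith
    · intro x hx
      have hfx := (habove x hx.1).2
      have h1 : G f (1 - ε) x < x := by rw [hGdef]; nlinarith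
      have h2 : K ≤ G f (1 - ε) x := by
        rw [hGdef]
        have h3 := mul_le_mul_of_nonneg_left (hLipR x hx) hε0.le
        have h4 : ε * (Lm + 1) * (x - K) ≤ 1 * (x - K) :=
            mul_le_mul_of_nonneg_right hεL (by linarith [hx.1])
        have h5 : ε * (Lp * (x - K)) ≤ ε * (Lm * (x - K)) :=
          mul_le_mul_of_nonneg_left
            (mul_le_mul_of_nonneg_right hLmLp (by linarith [hx.1])) hε0.le
        nlinarith
      have h3 := hfge _ h2
      rw [hGdef (1 - ε) (G f (1 - ε) x)]
      nlinarith
  -- invariant interval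
  obtain ⟨M, hM0, hMf⟩ : ∃ M, x₀ ≤ M ∧ fm ≤ M := ⟨max x₀ fm, le_max_left _ _, le_max_right _ _⟩
  obtain ⟨m, hm0, hmx, hmK, hmf⟩ : ∃ m, 0 < m ∧ m ≤ x₀ ∧ m ≤ K ∧
      ∀ x, K ≤ x → x ≤ M → m ≤ f x := by
    obtain ⟨c, hc, hcmin⟩ := isCompact_Icc.exists_isMinOn
      (Set.nonempty_Icc.2 (hfmK.le.trans hMf))
      (hf_cont.mono (fun y (hy : y ∈ Set.Icc K M) => hK.le.trans hy.1))
    have hfc : 0 < f c := by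
      rcases hc.1.eq_or_lt with h | h
      · rw [← h, hfK]; exact hK
      · exact (habove c h).1
    refine ⟨min (min x₀ K) (f c), by positivity,
      (min_le_left _ _).trans (min_le_left _ _), (min_le_left _ _).trans (min_le_right _ _), ?_⟩
    intro x h1 h2
    exact (min_le_right _ _).trans (hcmin ⟨h1, h2⟩)
  let T := Set.Icc βlo βhi
  let Φ : ℝ × ℝ → ℝ := fun p => G f p.1 p.2
  let D : ℕ → Set ℝ := fun n => Nat.rec (Set.Icc m M) (fun _ S => Φ '' (T ×ˢ S)) n
  have hD0 : D 0 = Set.Icc m M := rfl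
  have hDs : ∀ n, D (n+1) = Φ '' (T ×ˢ D n) := fun _ => rfl
  have hΦ : ContinuousOn Φ (T ×ˢ D 0) := by
    have : ContinuousOn (fun p : ℝ × ℝ => f p.2) (T ×ˢ D 0) :=
      hf_cont.comp continuousOn_snd (fun p hp => hm0.le.trans hp.2.1)
    have h2 : ContinuousOn (fun p : ℝ × ℝ => (1 - p.1) * f p.2 + p.1 * p.2) (T ×ˢ D 0) :=
      ((continuousOn_const.sub continuousOn_fst).mul this).add
        (continuousOn_fst.mul continuousOn_snd)
    exact h2
  have hanti : ∀ n, D (n+1) ⊆ D n := by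
    intro n
    induction n with
    | zero =>
      rw [hDs]
      rintro _ ⟨⟨α, x⟩, ⟨⟨hα1, hα2⟩, hx1, hx2⟩, rfl⟩
      simp only at hα1 hα2 hx1 hx2
      change G f α x ∈ Set.Icc m M
      rw [hGdef]
      rcases le_total x K with h | h
      · have h1 := hfle x (hm0.le.trans hx1) h
        have h2 := hfmax x (hm0.le.trans hx1) h
        constructor <;> nlinarith
      · have h1 := hfge x h
        have h2 := hmf x h hx2
        constructor <;> nlinarith
    | succ k ih =>
      rw [hDs (k+1), hDs k]
      exact Set.image_mono (Set.prod_mono le_rfl ih)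
  have hmono : Antitone D := antitone_nat_of_succ_le hanti
  have hDc : ∀ n, IsCompact (D n) := by
    intro n
    induction n with
    | zero => exact isCompact_Icc
    | succ k ih =>
      rw [hDs]
      exact (isCompact_Icc.prod ih).image_of_continuousOn
        (hΦ.mono (Set.prod_mono le_rfl (hmono (Nat.zero_le k))))
  have hDne : ∀ n, (D n).Nonempty := by
    intro n
    induction n with
    | zero => exact ⟨x₀, hmx, hM0⟩
    | succ k ih =>
      rw [hDs]
      exact ((Set.nonempty_Icc.2 hβ.le).prod ih).image _
  have hAne : (⋂ n, D n).Nonempty :=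
    IsCompact.nonempty_iInter_of_sequence_nonempty_isCompact_isClosed D hanti hDne (hDc 0)
      (fun n => (hDc n).isClosed)
  have hAc : IsCompact (⋂ n, D n) :=
    (hDc 0).of_isClosed_subset (isClosed_iInter fun n => (hDc n).isClosed)
      (Set.iInter_subset _ 0)
  have hpre := nested_aux Φ T isCompact_Icc D hDc hanti hDs hΦ
  have hApos : ∀ x ∈ ⋂ n, D n, 0 < x := fun x hx => hm0.trans_le (Set.mem_iInter.1 hx 0).1
  obtain ⟨a, haA, hamin⟩ := hAc.exists_isLeast hAne
  obtain ⟨b, hbA, hbmax⟩ := hAc.exists_isGreatest hAne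
  obtain ⟨α, ⟨hα1, hα2⟩, x, hxA, hxb⟩ := hpre b hbA
  obtain ⟨α', ⟨hα1', hα2'⟩, x', hxA', hxa⟩ := hpre a haA
  change (1 - α) * f x + α * x = b at hxb
  change (1 - α') * f x' + α' * x' = a at hxa
  have hxpos := hApos x hxA
  have hxpos' := hApos x' hxA'
  have hax := hamin hxA
  have hax' := hamin hxA'
  have hbx := hbmax hxA
  have hbx' := hbmax hxA'
  have hxleK : x ≤ K := by
    by_contra! h
    have := (habove x h).2
    nlinarith
  have hxgeK' : K ≤ x' := by
    by_contra! h
    have := hbelow x' ⟨hxpos', h⟩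
    nlinarith
  have hab : a = K ∧ b = K := by
    rcases hxleK.eq_or_lt with h | h
    · have hb : b = K := by rw [← hxb, h, hfK]; ring
      have hx' : x' = K := le_antisymm (hb ▸ hbx') hxgeK'
      refine ⟨?_, hb⟩
      rw [← hxa, hx', hfK]; ring
    rcases hxgeK'.eq_or_lt with h' | h'
    · have : a = K := by rw [← hxa, ← h', hfK]; ring
      linarith
    exfalso
    have hfx := hbelow x ⟨hxpos, h⟩
    have hfx' := (habove x' h').2
    have hfxm := hfmax x hxpos.le h.le
    have hg : b < G f β0 x := by
      rw [hGdef]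
      have := mul_pos (show 0 < α - β0 by linarith) (show 0 < f x - x by linarith)
      linarith
    have hg' : G f β0 x' < a := by
      rw [hGdef]
      have := mul_pos (show 0 < α' - β0 by linarith) (show 0 < x' - f x' by linarith)
      linarith
    have hbfm : b < fm := by
      have h1 : (1 - α) * f x ≤ (1 - α) * fm :=
        mul_le_mul_of_nonneg_left hfxm (by linarith)
      have h2 : α * x < α * fm := mul_lt_mul_of_pos_left (by linarith) (by linarith)
      linarith
    have hf2 : f2m ≤ f x' := hf2m.1 ⟨x', ⟨h', by linarith⟩, rfl⟩
    have hf2a : f2m ≤ a := by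
      have := mul_pos (show 0 < α' by linarith) (show 0 < x' - f x' by linarith)
      linarith
    have hgc : ContinuousOn (G f β0) (Set.Icc x K) := by
      have h1 : ContinuousOn f (Set.Icc x K) := hf_cont.mono (fun y hy => hxpos.le.trans hy.1)
      have h2 : ContinuousOn (fun y => (1 - β0) * f y + β0 * y) (Set.Icc x K) := by fun_prop
      exact h2
    have hgK : G f β0 K = K := by rw [hGdef, hfK]; ring
    obtain ⟨z, hz, hzx⟩ := intermediate_value_Ioo' h.le hgc
      (show x' ∈ Set.Ioo (G f β0 K) (G f β0 x) from ⟨by rw [hgK]; exact h', by linarith⟩)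
    have := hB1 z ⟨by linarith [hz.1], hz.2⟩
    rw [hzx] at this
    linarith [hz.1]
  have hAK : ∀ y ∈ ⋂ n, D n, y = K := fun y hy =>
    le_antisymm (hab.2 ▸ hbmax hy) (hab.1 ▸ hamin hy)
  obtain ⟨N, hN⟩ := exists_subset_nhds_of_isCompact' (V := D) hmono.directed_ge hDc
    (fun n => (hDc n).isClosed) (U := Set.Ioo (K - δ) (K + δ))
    (fun y hy => by
      rw [hAK y hy]; exact Ioo_mem_nhds (by linarith) (by linarith))
  refine ⟨N, fun α hα u hu0 hu n hn => hN (hmono hn ?_)⟩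
  clear hn
  induction n with
  | zero => rw [hu0]; exact ⟨hmx, hM0⟩
  | succ k ih =>
    rw [hDs, hu]
    exact ⟨(α k, u k), ⟨hα k, ih⟩, rfl⟩
end

section
/- Let θ ∈ (0,K) and let L̃⁻ ≥ L̃⁺ > 1 satisfy f(x)−K ≤ L̃⁻(K−x) for all x ∈ [K−θ, K] and K−f(x) ≤ L̃⁺(x−K) for all x ∈ [K, K+θ]. Let α satisfy Ψ(L̃⁺, L̃⁻) < α ≤ (L̃⁻−1)/(L̃⁻+1) (so that 𝓛̃⁻(α) := (1−α)L̃⁻ − α ≥ 1). Then for every x₀ ∈ (K − θ/𝓛̃⁻(α), K+θ), the sequence defined by x_{n+1} = (1−α)f(x_n) + α x_n converges to K. -/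
open Set Filter

/-- `Ψ(u,v) = (uv−1)/((u+1)(v+1))`. -/
noncomputable def Psi (u v : ℝ) : ℝ := (u * v - 1) / ((u + 1) * (v + 1))

/-- deterministic local stability of PBC under one-sided Lipschitz
conditions near K: for α ∈ (Ψ(L̃⁺,L̃⁻), (L̃⁻−1)/(L̃⁻+1)], any solution starting in
(K − θ/𝓛̃⁻(α), K + θ) converges to K. -/
theorem stmt11
    (f : ℝ → ℝ) (K : ℝ)
    (hf_cont : ContinuousOn f (Set.Ici 0))
    (hf_nonneg : ∀ x, 0 ≤ x → 0 ≤ f x)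
    (hf0 : f 0 = 0)
    (hK : 0 < K)
    (hbelow : ∀ x ∈ Set.Ioo 0 K, x < f x)
    (habove : ∀ x ∈ Set.Ioi K, 0 < f x ∧ f x < x)
    (θ : ℝ) (hθ : θ ∈ Set.Ioo 0 K)
    (Lm Lp : ℝ) (hLp : 1 < Lp) (hLmLp : Lp ≤ Lm)
    (hLipL : ∀ x ∈ Set.Icc (K - θ) K, f x - K ≤ Lm * (K - x))
    (hLipR : ∀ x ∈ Set.Icc K (K + θ), K - f x ≤ Lp * (x - K))
    (α : ℝ) (hα₁ : Psi Lp Lm < α) (hα₂ : α ≤ (Lm - 1) / (Lm + 1))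
    (x : ℕ → ℝ)
    (hx0 : x 0 ∈ Set.Ioo (K - θ / ((1 - α) * Lm - α)) (K + θ))
    (hrec : ∀ n, x (n + 1) = (1 - α) * f (x n) + α * x n) :
    Tendsto x atTop (nhds K) := by
  obtain ⟨hθ0, hθK⟩ := hθ
  have hLm : 1 < Lm := lt_of_lt_of_le hLp hLmLp
  have hα0 : 0 < α := by
    refine lt_trans ?_ hα₁
    unfold Psi
    apply div_pos <;> nlinarith
  have hα2 : α * (Lm + 1) ≤ Lm - 1 := by
    rwa [le_div_iff₀ (by linarith)] at hα₂
  have hα1 : α < 1 := by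
    by_contra h
    push Not at h
    nlinarith
  have hPsi : Lp * Lm - 1 < α * ((Lp + 1) * (Lm + 1)) := by
    unfold Psi at hα₁
    rwa [div_lt_iff₀ (by nlinarith)] at hα₁
  obtain ⟨A, hA⟩ : ∃ A, A = (1 - α) * Lm - α := ⟨_, rfl⟩
  obtain ⟨B, hB⟩ : ∃ B, B = (1 - α) * Lp - α := ⟨_, rfl⟩
  rw [← hA] at hx0
  have hA1 : 1 ≤ A := by rw [hA]; nlinarith
  have hAB : A * B < 1 := by
    have : A * B - 1 = (1 - α) * ((Lp * Lm - 1) - α * ((Lp + 1) * (Lm + 1))) := by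
      rw [hA, hB]; ring
    nlinarith [mul_pos (sub_pos.2 hα1) (sub_pos.2 hPsi)]
  obtain ⟨F, hF⟩ : ∃ F : ℝ → ℝ, F = fun y => (1 - α) * f y + α * y := ⟨_, rfl⟩
  have hFe : ∀ y, F y = (1 - α) * f y + α * y := fun y => by rw [hF]
  obtain ⟨V, hV⟩ : ∃ V : ℝ → ℝ, V = fun y => max (y - K) (A * (K - y)) := ⟨_, rfl⟩
  have hVe : ∀ y, V y = max (y - K) (A * (K - y)) := fun y => by rw [hV]
  have hVc : Continuous V := by rw [hV]; fun_prop
  have hVabs : ∀ y, |y - K| ≤ V y := by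
    intro y
    rw [hVe, abs_le']
    refine ⟨le_max_left _ _, ?_⟩
    rcases le_total y K with h | h
    · refine le_trans ?_ (le_max_right _ _); nlinarith
    · refine le_trans ?_ (le_max_left _ _); linarith
  have hmem : ∀ y, V y ≤ θ → y ∈ Set.Icc (K - θ) (K + θ) := by
    intro y hy
    have := abs_le.1 ((hVabs y).trans hy)
    exact ⟨by linarith [this.1], by linarith [this.2]⟩
  have hFK : F K = K := by
    have h1 := hLipL K ⟨by linarith, le_rfl⟩
    have h2 := hLipR K ⟨le_rfl, by linarith⟩
    have : f K = K := by
      apply le_antisymm <;> nlinarith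
    rw [hFe, this]; ring
  -- right side: strict decrease
  have hright : ∀ y, K < y → V y ≤ θ → V (F y) < V y := by
    intro y hy hVy
    have hm := hmem y hVy
    have h1 := (habove y hy).2
    have h2 := hLipR y ⟨hy.le, hm.2⟩
    have hle : y - K ≤ V y := by rw [hVe]; exact le_max_left _ _
    refine lt_of_lt_of_le ?_ hle
    rw [hVe, max_lt_iff, hFe]
    have e1 : (1 - α) * f y < (1 - α) * y := mul_lt_mul_of_pos_left h1 (by linarith)
    refine ⟨by linarith, ?_⟩
    have e2 : K - ((1 - α) * f y + α * y) ≤ B * (y - K) := by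
      rw [hB]; nlinarith [mul_le_mul_of_nonneg_left h2 (sub_pos.2 hα1).le]
    have e3 := mul_le_mul_of_nonneg_left e2 (by linarith : (0:ℝ) ≤ A)
    nlinarith [mul_lt_mul_of_pos_right hAB (sub_pos.2 hy)]
  have hleft : ∀ y, y < K → V y ≤ θ → V (F y) ≤ V y ∧ (F y ≤ K → V (F y) < V y) := by
    intro y hy hVy
    have hm := hmem y hVy
    have h1 := hbelow y ⟨by linarith [hm.1], hy⟩
    have h2 := hLipL y ⟨hm.1, hy.le⟩
    have hle : A * (K - y) ≤ V y := by rw [hVe]; exact le_max_right _ _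
    have hApos : 0 < A := by linarith
    have e1 : y < F y := by
      rw [hFe]; nlinarith [mul_lt_mul_of_pos_left h1 (sub_pos.2 hα1)]
    have e2 : F y - K ≤ A * (K - y) := by
      rw [hFe, hA]; nlinarith [mul_le_mul_of_nonneg_left h2 (sub_pos.2 hα1).le]
    have e3 : A * (K - F y) < A * (K - y) := mul_lt_mul_of_pos_left (by linarith) hApos
    have e4 : 0 < A * (K - y) := mul_pos hApos (by linarith)
    refine ⟨le_trans ?_ hle, fun h => lt_of_lt_of_le ?_ hle⟩
    · rw [hVe (F y)]; exact max_le e2 e3.le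
    · rw [hVe (F y)]; exact max_lt (by linarith) e3
  have hstep : ∀ y, V y ≤ θ → V (F y) ≤ V y := by
    intro y hy
    rcases lt_trichotomy y K with h | h | h
    · exact (hleft y h hy).1
    · rw [h, hFK]
    · exact (hright y h hy).le
  have hstep2 : ∀ y, V y ≤ θ → y ≠ K → V (F (F y)) < V y := by
    intro y hy hne
    have h0 := hstep y hy
    rcases lt_or_gt_of_ne hne with h | h
    · rcases le_or_gt (F y) K with h' | h'
      · exact lt_of_le_of_lt (hstep _ (h0.trans hy)) ((hleft y h hy).2 h')
      · exact lt_of_lt_of_le (hright _ h' (h0.trans hy)) h0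
    · exact lt_of_le_of_lt (hstep _ (h0.trans hy)) (hright y h hy)
  have hxF : ∀ n, x (n + 1) = F (x n) := fun n => by rw [hFe, hrec]
  have hV0 : V (x 0) ≤ θ := by
    rw [hVe]
    have h1 := hx0.1
    have h2 : K - x 0 < θ / A := by linarith
    rw [lt_div_iff₀ (by linarith)] at h2
    exact max_le (by linarith [hx0.2]) (by linarith)
  have hVn : ∀ n, V (x n) ≤ θ := by
    intro n
    induction n with
    | zero => exact hV0
    | succ k ih => rw [hxF]; exact (hstep _ ih).trans ih
  have hanti : Antitone (fun n => V (x n)) :=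
    antitone_nat_of_succ_le fun n => by rw [hxF]; exact hstep _ (hVn n)
  have hbdd : BddBelow (Set.range fun n => V (x n)) :=
    ⟨0, by rintro _ ⟨n, rfl⟩; exact (abs_nonneg _).trans (hVabs _)⟩
  have hlim := tendsto_atTop_ciInf hanti hbdd
  generalize (⨅ n, V (x n)) = l at hlim
  obtain ⟨y, hy, φ, hφ, hlimy⟩ :=
    (isCompact_Icc : IsCompact (Set.Icc (K - θ) (K + θ))).tendsto_subseq
      (fun n => hmem _ (hVn n))
  have hFc : ∀ z, V z ≤ θ → ContinuousAt F z := by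
    intro z hz
    have hz0 : 0 < z := by linarith [(hmem z hz).1]
    have := hf_cont.continuousAt (Ici_mem_nhds hz0)
    rw [hF]
    fun_prop
  have hVy : Tendsto (fun n => V (x (φ n))) atTop (nhds (V y)) :=
    (hVc.tendsto y).comp hlimy
  have hly : V y = l := tendsto_nhds_unique hVy (hlim.comp hφ.tendsto_atTop)
  have hyθ : V y ≤ θ := le_of_tendsto' hVy fun n => hVn _
  have hF1 := (hFc y hyθ).tendsto.comp hlimy
  have hF2 := (hVc.tendsto _).comp ((hFc (F y) ((hstep y hyθ).trans hyθ)).tendsto.comp hF1)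
  have hlim2 : Tendsto (fun n => V (x (φ n + 2))) atTop (nhds l) :=
    hlim.comp ((tendsto_add_atTop_nat 2).comp hφ.tendsto_atTop)
  have hF2l : V (F (F y)) = l := by
    refine tendsto_nhds_unique hF2 (hlim2.congr fun n => ?_)
    simp only [Function.comp]
    rw [← hxF, ← hxF]
  have hyK : y = K := by
    by_contra hne
    have := hstep2 y hyθ hne
    linarith
  have hl0 : l = 0 := by rw [← hly, hyK, hVe]; simp
  rw [hl0] at hlim
  rw [tendsto_iff_norm_sub_tendsto_zero]
  exact squeeze_zero (fun n => norm_nonneg _) (fun n => hVabs (x n)) hlim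
end

section
/- Set β̲₀ := Ψ(L⁻, L⁺) = (L⁻L⁺−1)/((L⁻+1)(L⁺+1)). Then for every α ∈ (β̲₀, 1) and every x₀ > 0, the sequence defined by x_{n+1} = (1−α)f(x_n) + α x_n converges to K. -/
open Set Filter

lemma icc_le_aux (f : ℝ → ℝ) (hf : ContinuousOn f (Set.Ici 0)) (p q s a b : ℝ) (hp : 0 ≤ p)
    (hpq : p < q) (h : ∀ y ∈ Set.Ioo p q, s * f y ≤ a + b * y) :
    ∀ y ∈ Set.Icc p q, s * f y ≤ a + b * y := by
  intro y hy
  have hc : y ∈ closure (Set.Ioo p q) := by rw [closure_Ioo hpq.ne]; exact hy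
  have hfy : ContinuousWithinAt f (Set.Ioo p q) y :=
    (hf y (le_trans hp hy.1)).mono (fun z hz => le_trans hp hz.1.le)
  exact ContinuousWithinAt.closure_le hc (continuousWithinAt_const.mul hfy)
    (by fun_prop : Continuous fun y => a + b * y).continuousWithinAt h

lemma lyap_aux (g V : ℝ → ℝ) (hg : ContinuousOn g (Set.Ici 0)) (K M c : ℝ) (hc : 0 < c)
    (hK : 0 < K) (hV : ∀ y, V y = max (c * (K - y)) (y - K))
    (hd : ∀ y, 0 < y → y ≤ M → y ≠ K → V (g y) < V y) (hgK : g K = K)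
    (x : ℕ → ℝ) (hx : ∀ n, 0 < x n) (hxM : ∀ n, x n ≤ M) (hr : ∀ n, x (n+1) = g (x n)) :
    Tendsto x atTop (nhds K) := by
  have hVc : Continuous V := by
    rw [funext hV]; fun_prop
  have hV0 : ∀ y, 0 ≤ V y := by
    intro y; rw [hV]
    rcases le_total y K with h | h
    · exact le_max_of_le_left (mul_nonneg hc.le (by linarith))
    · exact le_max_of_le_right (by linarith)
  have hanti : Antitone (fun n => V (x n)) := by
    apply antitone_nat_of_succ_le
    intro n
    by_cases h : x n = K
    · rw [hr, h, hgK]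
    · rw [hr]; exact (hd _ (hx n) (hxM n) h).le
  have hbdd : BddBelow (Set.range (fun n => V (x n))) := ⟨0, by rintro _ ⟨n, rfl⟩; exact hV0 _⟩
  have hlim := tendsto_atTop_ciInf hanti hbdd
  set v := ⨅ n, V (x n) with hv
  have hvle : ∀ n, v ≤ V (x n) := fun n => ciInf_le hbdd n
  obtain ⟨y, hy, φ, hφ, hyl⟩ := (isCompact_Icc (a := (0:ℝ)) (b := M)).tendsto_subseq
    (fun n => ⟨(hx n).le, hxM n⟩ : ∀ n, x n ∈ Set.Icc 0 M)
  have hVy : V y = v := tendsto_nhds_unique ((hVc.tendsto y).comp hyl)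
    (hlim.comp hφ.tendsto_atTop)
  have hVgy : V (g y) = v := by
    have h1 : Tendsto (fun n => g (x (φ n))) atTop (nhds (g y)) := by
      refine Tendsto.comp (hg y hy.1) ?_
      exact tendsto_nhdsWithin_iff.2 ⟨hyl, Eventually.of_forall fun n => (hx _).le⟩
    refine tendsto_nhds_unique ((hVc.tendsto _).comp h1) ?_
    have := (hlim.comp (tendsto_add_atTop_nat 1)).comp hφ.tendsto_atTop
    refine this.congr fun n => ?_
    simp [hr]
  have hyK : y = K := by
    by_contra hne
    rcases hy.1.eq_or_lt with h0 | h0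
    · have : ∀ᶠ n in atTop, x (φ n) < K := hyl.eventually (gt_mem_nhds (by linarith))
      obtain ⟨n, hn⟩ := this.exists
      have h1 := hvle (φ n)
      rw [← hVy, hV, hV] at h1
      have h2 := hx (φ n)
      have h3 : max (c * (K - x (φ n))) (x (φ n) - K) < c * (K - y) := by
        apply max_lt <;> nlinarith
      exact absurd (le_trans (le_max_left _ _) h1) (not_le.2 h3)
    · have := hd y h0 hy.2 hne
      linarith
  have hv0 : v = 0 := by rw [← hVy, hyK, hV]; simp
  rw [hv0] at hlim
  have hb : ∀ n, |x n - K| ≤ (1 + 1 / c) * V (x n) := by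
    intro n
    have h1 : c * (K - x n) ≤ V (x n) := by rw [hV]; exact le_max_left _ _
    have h2 : x n - K ≤ V (x n) := by rw [hV]; exact le_max_right _ _
    have h3 : K - x n ≤ 1 / c * V (x n) := by
      rw [div_mul_eq_mul_div, one_mul, le_div_iff₀ hc]; linarith
    have h4 := hV0 (x n)
    have h5 : 0 ≤ 1 / c * V (x n) := by positivity
    rw [abs_le]; constructor <;> linarith
  rw [tendsto_iff_norm_sub_tendsto_zero]
  refine squeeze_zero (fun n => norm_nonneg _) hb ?_
  simpa using hlim.const_mul (1 + 1 / c)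

/-- any constant control α ∈ (β̲₀, 1) with β̲₀ = Ψ(L⁻,L⁺) globally
stabilizes K for the deterministic PBC equation. -/
theorem stmt17
    (f : ℝ → ℝ) (K : ℝ)
    (hf_cont : ContinuousOn f (Set.Ici 0))
    (hf_nonneg : ∀ x, 0 ≤ x → 0 ≤ f x)
    (hf0 : f 0 = 0)
    (hK : 0 < K)
    (hbelow : ∀ x ∈ Set.Ioo 0 K, x < f x)
    (habove : ∀ x ∈ Set.Ioi K, 0 < f x ∧ f x < x)
    (fm f2m : ℝ)
    (hfm : IsGreatest (f '' Set.Icc 0 K) fm)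
    (hfmK : K < fm)
    (hf2m : IsGLB (f '' Set.Ioo K fm) f2m)
    (xmax : ℝ) (hxmax_mem : xmax ∈ Set.Icc 0 K) (hxmax_val : f xmax = fm)
    (hxmax_largest : ∀ y ∈ Set.Icc 0 K, f y = fm → y ≤ xmax)
    (Lm Lp : ℝ) (hLp : 1 < Lp) (hLmLp : Lp ≤ Lm)
    (hLipL : ∀ x ∈ Set.Ioo xmax K, f x - K ≤ Lm * (K - x))
    (hLipR : ∀ x ∈ Set.Ioo K fm, K - f x ≤ Lp * (x - K))
    (α : ℝ) (hα : α ∈ Set.Ioo (Psi Lm Lp) 1)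
    (x : ℕ → ℝ) (hx0 : 0 < x 0)
    (hrec : ∀ n, x (n + 1) = (1 - α) * f (x n) + α * x n) :
    Tendsto x atTop (nhds K) := by
  obtain ⟨hα1, hα2⟩ := hα
  have hLm : 1 < Lm := by linarith
  have hst : 0 < (Lm + 1) * (Lp + 1) := by positivity
  have hα0 : 0 < α := by
    refine lt_trans ?_ hα1
    unfold Psi
    apply div_pos _ hst
    nlinarith
  have hkey : Lm * Lp - 1 < α * ((Lm + 1) * (Lp + 1)) := by
    unfold Psi at hα1
    rwa [div_lt_iff₀ hst] at hα1
  have hfmle : ∀ y ∈ Set.Icc 0 K, f y ≤ fm := fun y hy => hfm.2 ⟨y, hy, rfl⟩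
  have hfK : f K = K := by
    apply le_antisymm
    · have := icc_le_aux f hf_cont K (K+1) 1 0 1 hK.le (by linarith)
        (fun y hy => by linarith [(habove y hy.1).2]) K ⟨le_rfl, by linarith⟩
      linarith
    · have := icc_le_aux f hf_cont 0 K (-1) 0 (-1) le_rfl hK
        (fun y hy => by linarith [hbelow y hy]) K ⟨hK.le, le_rfl⟩
      linarith
  have hxK : xmax < K := by
    rcases hxmax_mem.2.eq_or_lt with h | h
    · rw [h, hfK] at hxmax_val; linarith
    · exact h
  have hL1 : ∀ y ∈ Set.Icc xmax K, f y - K ≤ Lm * (K - y) := by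
    intro y hy
    have := icc_le_aux f hf_cont xmax K 1 (K + Lm * K) (-Lm) hxmax_mem.1 hxK
      (fun y hy => by linarith [hLipL y hy]) y hy
    linarith
  have hL : ∀ y ∈ Set.Icc 0 K, f y - K ≤ Lm * (K - y) := by
    intro y hy
    rcases le_total xmax y with h | h
    · exact hL1 y ⟨h, hy.2⟩
    · have h1 := hL1 xmax ⟨le_rfl, hxK.le⟩
      have h2 := hfmle y hy
      nlinarith
  have hR : ∀ y ∈ Set.Icc K fm, K - f y ≤ Lp * (y - K) := by
    intro y hy
    have := icc_le_aux f hf_cont K fm (-1) (-K - Lp * K) Lp hK.le hfmK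
      (fun y hy => by linarith [hLipR y hy]) y hy
    linarith
  have hpos : ∀ n, 0 < x n := by
    intro n
    induction n with
    | zero => exact hx0
    | succ n ih =>
      rw [hrec]
      have := mul_nonneg (by linarith : 0 ≤ 1 - α) (hf_nonneg _ ih.le)
      have := mul_pos hα0 ih
      linarith
  have hgc : ContinuousOn (G f α) (Set.Ici 0) := by
    unfold G; fun_prop
  have hent : ∃ N, x N ≤ fm := by
    by_contra! hcon
    have hanti : Antitone x := by
      apply antitone_nat_of_succ_le
      intro n
      rw [hrec]
      have := (habove (x n) (lt_trans hfmK (hcon n))).2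
      nlinarith
    have hbdd : BddBelow (Set.range x) := ⟨0, by rintro _ ⟨n, rfl⟩; exact (hpos n).le⟩
    have hlim := tendsto_atTop_ciInf hanti hbdd
    set l := ⨅ n, x n
    have hl : fm ≤ l := le_ciInf fun n => (hcon n).le
    have h1 : Tendsto (fun n => G f α (x n)) atTop (nhds (G f α l)) := by
      refine Tendsto.comp (hgc l (by simp only [Set.mem_Ici]; linarith)) ?_
      exact tendsto_nhdsWithin_iff.2 ⟨hlim, Eventually.of_forall fun n => (hpos _).le⟩
    have h2 : G f α l = l := by
      refine tendsto_nhds_unique h1 ((hlim.comp (tendsto_add_atTop_nat 1)).congr fun n => ?_)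
      simp [hrec, G]
    have h3 := (habove l (lt_of_lt_of_le hfmK hl)).2
    unfold G at h2
    nlinarith
  obtain ⟨N, hN⟩ := hent
  have hstay : ∀ n, x (n + N) ≤ fm := by
    intro n
    induction n with
    | zero => simpa using hN
    | succ n ih =>
      rw [show n + 1 + N = (n + N) + 1 by ring, hrec]
      have hfx : f (x (n + N)) ≤ fm := by
        rcases le_or_gt (x (n + N)) K with h | h
        · exact hfmle _ ⟨(hpos _).le, h⟩
        · linarith [(habove _ h).2]
      nlinarith
  set A := (1 - α) * Lm - α with hA
  set B := (1 - α) * Lp - α with hB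
  have hAB : A * B < 1 := by
    have : A * B - 1 = (1 - α) * (Lm * Lp - 1 - α * ((Lm + 1) * (Lp + 1))) := by
      rw [hA, hB]; ring
    nlinarith
  obtain ⟨c, hc0, hcA, hcB⟩ : ∃ c, 0 < c ∧ A < c ∧ c * B < 1 := by
    rcases le_or_gt B 0 with h | h
    · refine ⟨max A 0 + 1, by positivity, by linarith [le_max_left A 0], ?_⟩
      have : 0 < max A 0 + 1 := by positivity
      nlinarith
    · obtain ⟨c, h1, h2⟩ := exists_between (show max A 0 < 1 / B from
        max_lt (by rwa [lt_div_iff₀ h]) (by positivity))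
      exact ⟨c, lt_of_le_of_lt (le_max_right _ _) h1, lt_of_le_of_lt (le_max_left _ _) h1,
        by rwa [lt_div_iff₀ h] at h2⟩
  refine (tendsto_add_atTop_iff_nat N).1 ?_
  refine lyap_aux (G f α) (fun y => max (c * (K - y)) (y - K)) hgc K fm c hc0 hK (fun _ => rfl)
    ?_ (by unfold G; rw [hfK]; ring) _ (fun n => hpos _) hstay
    (fun n => by rw [show n + 1 + N = (n + N) + 1 by ring, hrec]; rfl)
  intro y hy0 hyM hyK
  have h1α : 0 < 1 - α := by linarith
  rcases lt_or_gt_of_ne hyK with h | h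
  · refine lt_max_of_lt_left (max_lt ?_ ?_)
    · have := mul_pos h1α (sub_pos.2 (hbelow y ⟨hy0, h⟩))
      apply mul_lt_mul_of_pos_left _ hc0
      unfold G; linarith
    · have h1 := mul_le_mul_of_nonneg_left (hL y ⟨hy0.le, h.le⟩) h1α.le
      have h2 : G f α y - K ≤ A * (K - y) := by unfold G; rw [hA]; linarith
      have h3 := mul_lt_mul_of_pos_right hcA (sub_pos.2 h)
      linarith
  · refine lt_max_of_lt_right (max_lt ?_ ?_)
    · have h1 := mul_le_mul_of_nonneg_left (hR y ⟨h.le, hyM⟩) h1α.le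
      have h2 : K - G f α y ≤ B * (y - K) := by unfold G; rw [hB]; linarith
      have h3 := mul_lt_mul_of_pos_right hcB (sub_pos.2 h)
      have h4 := mul_le_mul_of_nonneg_left h2 hc0.le
      linarith
    · have := mul_pos h1α (sub_pos.2 (habove y h).2)
      unfold G; linarith
end

section
/- Let m ≥ 2 and 0 < a_m < a_{m−1} < ⋯ < a_1 < a_0 := K, and let L_i^−, L_i^+ > 0 for i = 0,…,m−1 with L_0^− L_0^+ > 1. Set α₀ := Ψ(L_0^−, L_0^+) and, for each i, 𝓛_i^±(α) := L_i^± − α(L_i^± + 1); assume 𝓛_{i−1}^−(α₀) > 0 for all i = 1,…,m, and define b_0 := K and b_i := 𝓛_{i−1}^−(α₀)(a_{i−1} − a_i) + b_{i−1} for i = 1,…,m. Suppose: f(x) − K ≤ L_0^−(K−x) for all x ∈ [a_1, K]; K − f(x) ≤ L_0^+(x−K) for all x > K; for each i = 1,…,m−1: f(x) − f(a_i) ≤ L_i^−(a_i − x) for all x ∈ [a_{i+1}, a_i] and f(b_i) − f(x) ≤ L_i^+(x − b_i) for all x ≥ b_i; α₀ ≥ Ψ(L_i^−, L_i^+) for every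 i = 1,…,m−1; and [f²_m, f_m] ⊆ [a_m, b_m]. Then for every α ∈ (α₀, 1) and every x₀ > 0, the sequence defined by x_{n+1} = (1−α)f(x_n) + α x_n converges to K. -/
open Set Filter

lemma aux_pre (x : ℕ → ℝ) (g : ℝ → ℝ) (c B : ℝ) (hc : ∀ n, x n ∈ Set.Icc c B)
    (hg : ∀ y ∈ Set.Icc c B, ContinuousAt g y) (hrec : ∀ n, x (n + 1) = g (x n))
    (s : ℝ) (hs : MapClusterPt s atTop x) :
    ∃ y, MapClusterPt y atTop x ∧ y ∈ Set.Icc c B ∧ g y = s := by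
  obtain ⟨U, hU, hUs⟩ := mapClusterPt_iff_ultrafilter.1 hs
  have hpred : Tendsto (fun n : ℕ => n - 1) atTop atTop := tendsto_sub_atTop_nat 1
  obtain ⟨y, hy, hy2⟩ := (isCompact_Icc (a := c) (b := B)).ultrafilter_le_nhds
    ((U.map (fun n : ℕ => n - 1)).map x)
    (by
      rw [le_principal_iff]
      exact Filter.mem_map.2 (Filter.univ_mem' (fun n => hc _)))
  have hy3 : Tendsto x (U.map (fun n : ℕ => n - 1) : Ultrafilter ℕ) (nhds y) := hy2
  have hy4 : Tendsto (fun n => x (n - 1)) U (nhds y) := hy3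
  refine ⟨y, ?_, hy, ?_⟩
  · refine mapClusterPt_iff_ultrafilter.2 ⟨U.map (fun n : ℕ => n - 1), ?_, hy3⟩
    exact (hpred.mono_left hU)
  · have h1 : Tendsto (fun n => g (x (n - 1))) U (nhds (g y)) := (hg y hy).tendsto.comp hy4
    refine tendsto_nhds_unique_of_eventuallyEq h1 hUs ?_
    have : ∀ᶠ n : ℕ in atTop, 1 ≤ n := eventually_ge_atTop 1
    filter_upwards [hU this] with n hn
    have := hrec (n - 1)
    rw [Nat.sub_add_cancel hn] at this
    exact this.symm

lemma aux_dyn (x : ℕ → ℝ) (g : ℝ → ℝ) (c B K : ℝ) (hc0 : 0 < c) (hc : ∀ n, x n ∈ Set.Icc c B)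
    (hg : ∀ y ∈ Set.Icc c B, ContinuousAt g y) (hrec : ∀ n, x (n + 1) = g (x n))
    (hgK : g K = K) (hlo : ∀ y, 0 < y → y < K → y < g y) (hhi : ∀ y, K < y → g y < y)
    (hno : ∀ y z, 0 < y → y < K → K < z → z ≤ g y → g z ≤ y → False) :
    Tendsto x atTop (nhds K) := by
  have hcl : ∀ s, MapClusterPt s atTop x → s ∈ Set.Icc c B := fun s hs => by
    obtain ⟨U, hU, hUs⟩ := mapClusterPt_iff_ultrafilter.1 hs
    exact isClosed_Icc.mem_of_tendsto hUs (Filter.Eventually.of_forall hc)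
  have hcomp : IsCompact {s | MapClusterPt s atTop x} :=
    isCompact_Icc.of_isClosed_subset isClosed_setOfPred_clusterPt hcl
  have hne : {s | MapClusterPt s atTop x}.Nonempty := by
    obtain ⟨s, _, hs⟩ := (isCompact_Icc (a := c) (b := B)).exists_mapClusterPt (f := atTop) (u := x)
      (by rw [le_principal_iff]; exact Filter.mem_map.2 (Filter.univ_mem' hc))
    exact ⟨s, hs⟩
  obtain ⟨S, hS, hSm⟩ := hcomp.exists_isGreatest hne
  obtain ⟨I, hI, hIm⟩ := hcomp.exists_isLeast hne
  obtain ⟨y, hy, hyc, hyS⟩ := aux_pre x g c B hc hg hrec S hS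
  obtain ⟨z, hz, hzc, hzI⟩ := aux_pre x g c B hc hg hrec I hI
  have hyS' : y ≤ S := hSm hy
  have hzS' : z ≤ S := hSm hz
  have hyI' : I ≤ y := hIm hy
  have hzI' : I ≤ z := hIm hz
  have h1 : y ≤ K := by
    by_contra h
    have := hhi y (not_le.1 h)
    linarith
  have h2 : K ≤ z := by
    by_contra h
    have := hlo z (by linarith [hzc.1]) (not_le.1 h)
    linarith
  have hSK : y = K → S = K := fun h => by rw [← hyS, h, hgK]
  have hIK : z = K → I = K := fun h => by rw [← hzI, h, hgK]
  have hfin : S ≤ K ∧ K ≤ I := by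
    rcases h1.lt_or_eq with h | h
    · rcases h2.lt_or_eq with h' | h'
      · exact (hno y z (by linarith [hyc.1]) h h' (by linarith) (by linarith)).elim
      · have := hIK h'.symm
        constructor <;> linarith
    · have hs := hSK h
      have : z = K := le_antisymm (by linarith) h2
      have := hIK this
      constructor <;> linarith
  refine isCompact_Icc.tendsto_nhds_of_unique_mapClusterPt (Filter.Eventually.of_forall hc) ?_
  intro w _ hw
  have a1 : w ≤ S := hSm hw
  have a2 : I ≤ w := hIm hw
  linarith [hfin.1, hfin.2]

lemma aux_fix (f : ℝ → ℝ) (K : ℝ) (hK : 0 < K) (hf : ContinuousAt f K)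
    (hbelow : ∀ x ∈ Set.Ioo 0 K, x < f x) (habove : ∀ x ∈ Set.Ioi K, 0 < f x ∧ f x < x) :
    f K = K := by
  apply le_antisymm
  · have h1 : Tendsto f (nhdsWithin K (Set.Ioi K)) (nhds (f K)) := hf.tendsto.mono_left nhdsWithin_le_nhds
    have h2 : Tendsto (fun x : ℝ => x) (nhdsWithin K (Set.Ioi K)) (nhds K) :=
      tendsto_id.mono_left nhdsWithin_le_nhds
    refine le_of_tendsto_of_tendsto h1 h2 ?_
    filter_upwards [self_mem_nhdsWithin] with x hx using (habove x hx).2.le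
  · have h1 : Tendsto f (nhdsWithin K (Set.Iio K)) (nhds (f K)) := hf.tendsto.mono_left nhdsWithin_le_nhds
    have h2 : Tendsto (fun x : ℝ => x) (nhdsWithin K (Set.Iio K)) (nhds K) :=
      tendsto_id.mono_left nhdsWithin_le_nhds
    refine le_of_tendsto_of_tendsto h2 h1 ?_
    filter_upwards [Ioo_mem_nhdsLT hK] with x hx using (hbelow x hx).le

lemma aux_prod (u v A : ℝ) (hu : 0 < u) (hv : 0 < v) (hA : Psi u v ≤ A) (hA1 : A < 1) :
    (u - A * (u + 1)) * (v - A * (v + 1)) ≤ 1 := by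
  unfold Psi at hA
  rw [div_le_iff₀ (by positivity)] at hA
  nlinarith [mul_nonneg (sub_nonneg.2 hA) (sub_nonneg.2 hA1.le)]

/-- locating a point in a partition -/
lemma aux_loc (c : ℕ → ℝ) (m : ℕ) (z : ℝ) (h0 : c 0 ≤ z) (hz : z < c m) :
    ∃ j < m, c j ≤ z ∧ z < c (j + 1) := by
  induction m with
  | zero => exact absurd hz (not_lt.2 h0)
  | succ k ih =>
    by_cases h : z < c k
    · obtain ⟨j, hj, h⟩ := ih h
      exact ⟨j, by omega, h⟩
    · exact ⟨k, by omega, not_lt.1 h, hz⟩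

/-- global stability via a piecewise envelope built from several one-sided
Lipschitz constants: under the stated conditions, every constant control α ∈ (α₀,1)
globally stabilizes K. -/
theorem stmt18
    (f : ℝ → ℝ) (K : ℝ)
    (hf_cont : ContinuousOn f (Set.Ici 0))
    (hf_nonneg : ∀ x, 0 ≤ x → 0 ≤ f x)
    (hf0 : f 0 = 0)
    (hK : 0 < K)
    (hbelow : ∀ x ∈ Set.Ioo 0 K, x < f x)
    (habove : ∀ x ∈ Set.Ioi K, 0 < f x ∧ f x < x)
    (fm f2m : ℝ)
    (hfm : IsGreatest (f '' Set.Icc 0 K) fm)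
    (hfmK : K < fm)
    (hf2m : IsGLB (f '' Set.Ioo K fm) f2m)
    (xmax : ℝ) (hxmax_mem : xmax ∈ Set.Icc 0 K) (hxmax_val : f xmax = fm)
    (hxmax_largest : ∀ y ∈ Set.Icc 0 K, f y = fm → y ≤ xmax)
    (Lm Lp : ℝ) (hLp : 1 < Lp) (hLmLp : Lp ≤ Lm)
    (hLipL : ∀ x ∈ Set.Ioo xmax K, f x - K ≤ Lm * (K - x))
    (hLipR : ∀ x ∈ Set.Ioo K fm, K - f x ≤ Lp * (x - K))
    (m : ℕ) (hm : 2 ≤ m)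
    (a : ℕ → ℝ) (ha0 : a 0 = K) (ham : 0 < a m)
    (ha_dec : ∀ i < m, a (i + 1) < a i)
    (Lneg Lpos : ℕ → ℝ)
    (hLprod : ∀ i < m, 0 < Lneg i ∧ 0 < Lpos i)
    (hL0 : 1 < Lneg 0 * Lpos 0)
    (α₀ : ℝ) (hα₀ : α₀ = Psi (Lneg 0) (Lpos 0))
    (hcalL_pos : ∀ i, 1 ≤ i → i ≤ m → 0 < Lneg (i - 1) - α₀ * (Lneg (i - 1) + 1))
    (b : ℕ → ℝ) (hb0 : b 0 = K)
    (hb : ∀ i, 1 ≤ i → i ≤ m →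
      b i = (Lneg (i - 1) - α₀ * (Lneg (i - 1) + 1)) * (a (i - 1) - a i) + b (i - 1))
    (hf0L : ∀ x ∈ Set.Icc (a 1) K, f x - K ≤ Lneg 0 * (K - x))
    (hf0R : ∀ x, K < x → K - f x ≤ Lpos 0 * (x - K))
    (hfiL : ∀ i, 1 ≤ i → i < m →
      ∀ x ∈ Set.Icc (a (i + 1)) (a i), f x - f (a i) ≤ Lneg i * (a i - x))
    (hfiR : ∀ i, 1 ≤ i → i < m → ∀ x, b i ≤ x → f (b i) - f x ≤ Lpos i * (x - b i))
    (hdom : ∀ i, 1 ≤ i → i < m → Psi (Lneg i) (Lpos i) ≤ α₀)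
    (hsub : a m ≤ f2m ∧ fm ≤ b m)
    (α : ℝ) (hα : α ∈ Set.Ioo α₀ 1)
    (x : ℕ → ℝ) (hx0 : 0 < x 0)
    (hrec : ∀ n, x (n + 1) = (1 - α) * f (x n) + α * x n) :
    Tendsto x atTop (nhds K) := by
  obtain ⟨hα1, hα2⟩ := hα
  have hα0pos : 0 < α₀ := by
    have := hLprod 0 (by omega)
    rw [hα₀]; unfold Psi
    have h1 := this.1
    have h2 := this.2
    apply div_pos <;> [linarith; positivity]
  have hfc : ∀ y, 0 < y → ContinuousAt f y := fun y hy =>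
    hf_cont.continuousAt (Ici_mem_nhds hy)
  have hfK : f K = K := aux_fix f K hK (hfc K hK) hbelow habove
  obtain ⟨ℓ, hℓ⟩ : ∃ ℓ : ℕ → ℝ, ∀ i, ℓ i = Lneg i - α₀ * (Lneg i + 1) := ⟨_, fun _ => rfl⟩
  obtain ⟨p, hp⟩ : ∃ p : ℕ → ℝ, ∀ i, p i = Lpos i - α₀ * (Lpos i + 1) := ⟨_, fun _ => rfl⟩
  have hℓpos : ∀ i < m, 0 < ℓ i := fun i hi => by
    have := hcalL_pos (i + 1) (by omega) (by omega)
    rw [hℓ]; simpa using this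
  have hb' : ∀ i < m, b (i + 1) = ℓ i * (a i - a (i + 1)) + b i := fun i hi => by
    have := hb (i + 1) (by omega) (by omega)
    rw [hℓ]; simpa using this
  have hprod : ∀ i < m, ℓ i * p i ≤ 1 := fun i hi => by
    rw [hℓ, hp]
    refine aux_prod _ _ _ (hLprod i hi).1 (hLprod i hi).2 ?_ (by linarith)
    rcases Nat.eq_zero_or_pos i with rfl | h
    · exact hα₀.ge
    · exact hdom i h hi
  have hL : ∀ i < m, ∀ x ∈ Set.Icc (a (i + 1)) (a i), f x - f (a i) ≤ Lneg i * (a i - x) := by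
    intro i hi x hx
    rcases Nat.eq_zero_or_pos i with rfl | h
    · rw [ha0, hfK]; rw [ha0] at hx; exact hf0L x hx
    · exact hfiL i h hi x hx
  have hR : ∀ i < m, ∀ x, b i ≤ x → f (b i) - f x ≤ Lpos i * (x - b i) := by
    intro i hi x hx
    rcases Nat.eq_zero_or_pos i with rfl | h
    · rw [hb0] at hx ⊢
      rcases hx.lt_or_eq with h | h
      · rw [hfK]; exact hf0R x h
      · rw [← h]; simp
    · exact hfiR i h hi x hx
  have hbinc : ∀ i < m, b i < b (i + 1) := fun i hi => by
    have := mul_pos (hℓpos i hi) (sub_pos.2 (ha_dec i hi))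
    rw [hb' i hi]; linarith
  have hamono : ∀ i j, i ≤ j → j ≤ m → a j ≤ a i := by
    intro i j hij
    induction j, hij using Nat.le_induction with
    | base => intro _; exact le_rfl
    | succ k hk ih => intro h; exact (ha_dec k (by omega)).le.trans (ih (by omega))
  have hbmono : ∀ i j, i ≤ j → j ≤ m → b i ≤ b j := by
    intro i j hij
    induction j, hij using Nat.le_induction with
    | base => intro _; exact le_rfl
    | succ k hk ih => intro h; exact (ih (by omega)).trans (hbinc k (by omega)).le
  obtain ⟨G, hG⟩ : ∃ G : ℝ → ℝ, ∀ x, G x = (1 - α₀) * f x + α₀ * x := ⟨_, fun _ => rfl⟩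
  have hs0 : 0 < 1 - α₀ := by linarith
  have hGL : ∀ i < m, ∀ x ∈ Set.Icc (a (i + 1)) (a i), G x - G (a i) ≤ ℓ i * (a i - x) := by
    intro i hi x hx
    have := mul_le_mul_of_nonneg_left (hL i hi x hx) hs0.le
    rw [hG, hG, hℓ]; linarith
  have hGR : ∀ i < m, ∀ x, b i ≤ x → G (b i) - G x ≤ p i * (x - b i) := by
    intro i hi x hx
    have := mul_le_mul_of_nonneg_left (hR i hi x hx) hs0.le
    rw [hG, hG, hp]; linarith
  have hGa : ∀ i ≤ m, G (a i) ≤ b i := by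
    intro i
    induction i with
    | zero => intro _; rw [hG, ha0, hb0, hfK]; linarith
    | succ k ih =>
      intro h
      have h1 := hGL k (by omega) (a (k + 1)) ⟨le_rfl, (ha_dec k (by omega)).le⟩
      rw [hb' k (by omega)]
      linarith [ih (by omega)]
  have hmulR : ∀ i < m, ∀ x, b i ≤ x → ℓ i * (G (b i) - G x) ≤ x - b i := by
    intro i hi x hx
    have h1 := mul_le_mul_of_nonneg_left (hGR i hi x hx) (hℓpos i hi).le
    have h2 := mul_le_mul_of_nonneg_right (hprod i hi) (sub_nonneg.2 hx)
    linarith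
  have hGb : ∀ i ≤ m, a i ≤ G (b i) := by
    intro i
    induction i with
    | zero => intro _; rw [hG, ha0, hb0, hfK]; linarith
    | succ k ih =>
      intro h
      have h1 := hmulR k (by omega) (b (k + 1)) (hbinc k (by omega)).le
      have h3 := hb' k (by omega)
      have h4 : G (b k) - G (b (k + 1)) ≤ a k - a (k + 1) :=
        le_of_mul_le_mul_left (by linarith) (hℓpos k (by omega))
      linarith [ih (by omega)]
  obtain ⟨g, hgdef⟩ : ∃ g : ℝ → ℝ, ∀ x, g x = (1 - α) * f x + α * x := ⟨_, fun _ => rfl⟩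
  have hs : 0 < 1 - α := by linarith
  have hαpos : 0 < α := by linarith
  have hgG : ∀ x, x < f x → g x < G x := by
    intro x hx
    rw [hgdef, hG]
    nlinarith [mul_pos (sub_pos.2 hα1) (sub_pos.2 hx)]
  have hgG' : ∀ x, f x < x → G x < g x := by
    intro x hx
    rw [hgdef, hG]
    nlinarith [mul_pos (sub_pos.2 hα1) (sub_pos.2 hx)]
  have hgc : ∀ y, 0 < y → ContinuousAt g y := by
    intro y hy
    rw [show g = fun x => (1 - α) * f x + α * x from funext hgdef]
    exact (continuousAt_const.mul (hfc y hy)).add (continuousAt_const.mul continuousAt_id)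
  have hgK : g K = K := by rw [hgdef, hfK]; ring
  have hlo : ∀ y, 0 < y → y < K → y < g y := by
    intro y h1 h2
    have := mul_lt_mul_of_pos_left (hbelow y ⟨h1, h2⟩) hs
    rw [hgdef]; linarith
  have hhi : ∀ y, K < y → g y < y := by
    intro y h1
    have := mul_lt_mul_of_pos_left (habove y h1).2 hs
    rw [hgdef]; linarith
  have hfle : ∀ y, 0 ≤ y → y ≤ K → f y ≤ fm := fun y h1 h2 => hfm.2 ⟨y, ⟨h1, h2⟩, rfl⟩
  have hgfm : ∀ y, 0 ≤ y → y ≤ K → g y < fm := by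
    intro y h1 h2
    have := mul_le_mul_of_nonneg_left (hfle y h1 h2) hs.le
    have := mul_lt_mul_of_pos_left (h2.trans_lt hfmK) hαpos
    rw [hgdef]; linarith
  have hgpos : ∀ y, 0 < y → 0 < g y := by
    intro y hy
    have := mul_nonneg hs.le (hf_nonneg y hy.le)
    have := mul_pos hαpos hy
    rw [hgdef]; linarith
  have hno : ∀ y z, 0 < y → y < K → K < z → z ≤ g y → g z ≤ y → False := by
    intro y z hy0 hyK hzK hzy hyz
    have hzfm : z < fm := lt_of_le_of_lt hzy (hgfm y hy0.le hyK.le)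
    have hfz : f2m ≤ f z := hf2m.1 ⟨z, ⟨hzK, hzfm⟩, rfl⟩
    have hfz2 := (habove z hzK).2
    have hgz : f2m < g z := by
      have := mul_lt_mul_of_pos_left hfz2 hαpos
      rw [hgdef]; linarith
    have hyam : a m < y := by linarith [hsub.1]
    have hzbm : z < b m := by linarith [hsub.2]
    obtain ⟨j, hj, hj1, hj2⟩ := aux_loc b m z (by rw [hb0]; exact hzK.le) hzbm
    obtain ⟨i, hi, hi1, hi2⟩ := aux_loc (fun k => - a k) m (-y)
      (by simp only [ha0]; linarith) (by linarith)
    have e1 := hGL i hi y ⟨by linarith, by linarith⟩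
    have e2 := hGa i hi.le
    have e3 := hgG y (hbelow y ⟨hy0, hyK⟩)
    have e4 := hmulR j hj z hj1
    have e5 := hGb j hj.le
    have e6 := hgG' z hfz2
    have e7 : ℓ j * (a j - g z) < z - b j := by
      have := mul_lt_mul_of_pos_left (show a j - g z < G (b j) - G z by linarith) (hℓpos j hj)
      linarith
    rcases lt_trichotomy i j with h | h | h
    · have := hbmono (i + 1) j h hj.le
      have h3 := hb' i hi
      have := mul_le_mul_of_nonneg_left (show a i - y ≤ a i - a (i + 1) by linarith) (hℓpos i hi).le
      linarith
    · subst h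
      have := mul_le_mul_of_nonneg_left (show a i - y ≤ a i - g z by linarith) (hℓpos i hi).le
      linarith
    · have := hamono (j + 1) i h hi.le
      have h3 := hb' j hj
      have := mul_le_mul_of_nonneg_left
        (show a j - a (j + 1) ≤ a j - g z by linarith) (hℓpos j hj).le
      linarith
  have hrec' : ∀ n, x (n + 1) = g (x n) := fun n => by rw [hrec, hgdef]
  have hxpos : ∀ n, 0 < x n := by
    intro n
    induction n with
    | zero => exact hx0
    | succ k ih => rw [hrec']; exact hgpos _ ih
  have hxB : ∀ n, x n ≤ max (x 0) fm := by
    intro n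
    induction n with
    | zero => exact le_max_left _ _
    | succ k ih =>
      rw [hrec']
      rcases le_or_gt (x k) K with h | h
      · exact (hgfm _ (hxpos k).le h).le.trans (le_max_right _ _)
      · exact (hhi _ h).le.trans ih
  obtain ⟨w, hw, hwmin⟩ := (isCompact_Icc (a := K) (b := max (x 0) fm)).exists_isMinOn
    ⟨K, le_rfl, hfmK.le.trans (le_max_right _ _)⟩
    (f := g) (fun y hy => (hgc y (hK.trans_le hy.1)).continuousWithinAt)
  have hgw : 0 < g w := hgpos w (hK.trans_le hw.1)
  have hxc : ∀ n, min (x 0) (g w) ≤ x n := by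
    intro n
    induction n with
    | zero => exact min_le_left _ _
    | succ k ih =>
      rw [hrec']
      rcases lt_or_ge (x k) K with h | h
      · exact ih.trans (hlo _ (hxpos k) h).le
      · exact (min_le_right _ _).trans (hwmin ⟨h, hxB k⟩)
  have hcpos : 0 < min (x 0) (g w) := lt_min hx0 hgw
  exact aux_dyn x g _ _ K hcpos (fun n => ⟨hxc n, hxB n⟩)
    (fun y hy => hgc y (hcpos.trans_le hy.1)) hrec' hgK hlo hhi hno
end

section
/- Suppose f is continuously differentiable on (0,∞) with f′(K) < −1 and f′(x) < 1 for all x ∈ [x_max, f_m]. Set α₀ := (−f′(K)−1)/(−f′(K)+1) and assume that for every x ∈ [x_max, K), ((1−α₀)f′(G(α₀,x)) + α₀)·((1−α₀)f′(x) + α₀) < 1 (equivalently, α₀ > Ψ(f′(G(α₀,x)), f′(x))). Then for every α ∈ (α₀, 1) and every x₀ > 0, the sequence defined by x_{n+1} = (1−α)f(x_n) + α x_n converges to K. -/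
open Set Filter

lemma conv_aux_s19 (g : ℝ → ℝ) (K B : ℝ) (hg : ContinuousOn g (Set.Ioi 0)) (hK : 0 < K)
    (gK : g K = K) (below : ∀ y ∈ Set.Ioo 0 K, y < g y)
    (above : ∀ y, K < y → 0 < g y ∧ g y < y)
    (g2 : ∀ y ∈ Set.Ioo 0 K, y < g (g y))
    (hB : ∀ y ∈ Set.Ioo 0 K, g y ≤ B)
    (x : ℕ → ℝ) (hx0 : 0 < x 0) (hrec : ∀ n, x (n + 1) = g (x n)) :
    Tendsto x atTop (nhds K) := by
  -- bounds
  set M := max (x 0) (max B K) with hM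
  have hMx : x 0 ≤ M := le_max_left _ _
  have hMB : B ≤ M := (le_max_left _ _).trans (le_max_right _ _)
  have hMK : K ≤ M := (le_max_right _ _).trans (le_max_right _ _)
  obtain ⟨w, hw, hwmin⟩ := (isCompact_Icc (a := K) (b := M)).exists_isMinOn
    ⟨K, le_refl _, hMK⟩ (hg.mono (fun y hy => lt_of_lt_of_le hK hy.1))
  have hwpos : 0 < g w := by
    rcases eq_or_lt_of_le hw.1 with h | h
    · rw [← h, gK]; exact hK
    · exact (above w h).1
  set a := min (x 0) (min K (g w)) with ha
  have hapos : 0 < a := lt_min hx0 (lt_min hK hwpos)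
  have hax : a ≤ x 0 := min_le_left _ _
  have haK : a ≤ K := (min_le_right _ _).trans (min_le_left _ _)
  have haw : a ≤ g w := (min_le_right _ _).trans (min_le_right _ _)
  have hmem : ∀ n, x n ∈ Set.Icc a M := by
    intro n
    induction n with
    | zero => exact ⟨hax, hMx⟩
    | succ n ih =>
      rw [hrec]
      rcases lt_trichotomy (x n) K with h | h | h
      · have h' : x n ∈ Set.Ioo 0 K := ⟨lt_of_lt_of_le hapos ih.1, h⟩
        exact ⟨ih.1.trans (below _ h').le, (hB _ h').trans hMB⟩
      · rw [h, gK]; exact ⟨haK, hMK⟩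
      · exact ⟨haw.trans (hwmin (⟨h.le, ih.2⟩ : x n ∈ Set.Icc K M)), (above _ h).2.le.trans ih.2⟩
  have hcomp : IsCompact (Set.Icc a M) := isCompact_Icc
  set Ω : Set ℝ := {c | MapClusterPt c atTop x} with hΩ
  have hΩsub : ∀ c ∈ Ω, c ∈ Set.Icc a M := by
    intro c hc
    exact isClosed_Icc.mem_of_mapClusterPt hc (Eventually.of_forall hmem)
  have hΩcl : IsClosed Ω := isClosed_setOfPred_clusterPt
  have hΩc : IsCompact Ω := hcomp.of_isClosed_subset hΩcl hΩsub
  have hΩne : Ω.Nonempty := by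
    obtain ⟨c, -, hc⟩ := hcomp.exists_mapClusterPt (f := atTop) (u := x)
      (tendsto_principal.2 (Eventually.of_forall hmem))
    exact ⟨c, hc⟩
  have hpre : ∀ c ∈ Ω, ∃ p ∈ Ω, g p = c := by
    intro c hc
    obtain ⟨φ, hφ, hlim⟩ := MapClusterPt.tendsto_subseq hc
    obtain ⟨p, hp, ψ, hψ, hlim2⟩ := hcomp.tendsto_subseq (x := fun n => x (φ (n+1) - 1))
      (fun n => hmem _)
    have hpos : ∀ n, φ (n+1) - 1 + 1 = φ (n+1) := fun n => by
      have := hφ.id_le (n+1)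
      simp at this
      omega
    have hat : Tendsto (fun n => φ (ψ n + 1) - 1) atTop atTop := by
      refine tendsto_atTop_mono (f := fun n => n) (fun n => ?_) tendsto_id
      have h1 := hφ.id_le (ψ n + 1)
      have h2 := hψ.id_le n
      simp at h1 h2
      omega
    refine ⟨p, ?_, ?_⟩
    · exact MapClusterPt.of_comp hat (Tendsto.mapClusterPt hlim2)
    · have hc1 : Tendsto (fun n => g (x (φ (ψ n + 1) - 1))) atTop (nhds (g p)) :=
        ((hg.continuousAt (Ioi_mem_nhds (lt_of_lt_of_le hapos hp.1))).tendsto).comp hlim2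
      have hc2 : Tendsto (fun n => g (x (φ (ψ n + 1) - 1))) atTop (nhds c) := by
        have : (fun n => g (x (φ (ψ n + 1) - 1))) = fun n => x (φ (ψ n + 1)) := by
          funext n
          rw [← hrec, hpos]
        rw [this]
        exact hlim.comp ((tendsto_add_atTop_nat 1).comp hψ.tendsto_atTop)
      exact tendsto_nhds_unique hc1 hc2
  obtain ⟨l, hl, hlmin⟩ := hΩc.exists_isLeast hΩne
  obtain ⟨u, hu, humax⟩ := hΩc.exists_isGreatest hΩne
  obtain ⟨p, hp, hpl⟩ := hpre l hl
  obtain ⟨q, hq, hqu⟩ := hpre u hu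
  have hlp := hlmin hp
  have hlq := hlmin hq
  have hpu := humax hp
  have hqu' := humax hq
  have hl0 : 0 < l := lt_of_lt_of_le hapos (hΩsub l hl).1
  have hKq : K < u → q < K := by
    intro h
    rcases lt_trichotomy q K with h1 | h1 | h1
    · exact h1
    · rw [h1, gK] at hqu; linarith
    · have := (above q h1).2; linarith
  have hKl : K ≤ l := by
    by_contra! hlK
    have hKp : K < p := by
      rcases lt_trichotomy p K with h1 | h1 | h1
      · have := below p ⟨by linarith, h1⟩; linarith
      · rw [h1, gK] at hpl; linarith
      · exact h1
    have hqK := hKq (by linarith)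
    have hivt := intermediate_value_Icc' hqK.le
      (hg.mono (fun y hy => lt_of_lt_of_le (lt_of_lt_of_le hl0 hlq) hy.1))
    obtain ⟨z, hz, hzp⟩ := hivt (⟨by rw [gK]; exact hKp.le, by rw [hqu]; exact hpu⟩ : p ∈ Set.Icc (g K) (g q))
    have hzK : z < K := lt_of_le_of_ne hz.2 (fun h => by rw [h, gK] at hzp; linarith)
    have := g2 z ⟨by linarith [hz.1], hzK⟩
    rw [hzp, hpl] at this
    linarith [hz.1]
  have huK : u ≤ K := by
    by_contra! h
    linarith [hKq h]
  refine hcomp.tendsto_nhds_of_unique_mapClusterPt (Eventually.of_forall hmem) ?_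
  intro c _ hc
  have h1 := hlmin (show c ∈ Ω from hc)
  have h2 := humax (show c ∈ Ω from hc)
  linarith

/-- for a continuously differentiable map satisfying the envelope condition
α₀ > Ψ(f′(G(α₀,x)), f′(x)) on [x_max, K), every constant control α ∈ (α₀,1) globally
stabilizes K. -/
theorem stmt19
    (f : ℝ → ℝ) (K : ℝ)
    (hf_cont : ContinuousOn f (Set.Ici 0))
    (hf_nonneg : ∀ x, 0 ≤ x → 0 ≤ f x)
    (hf0 : f 0 = 0)
    (hK : 0 < K)
    (hbelow : ∀ x ∈ Set.Ioo 0 K, x < f x)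
    (habove : ∀ x ∈ Set.Ioi K, 0 < f x ∧ f x < x)
    (fm f2m : ℝ)
    (hfm : IsGreatest (f '' Set.Icc 0 K) fm)
    (hfmK : K < fm)
    (hf2m : IsGLB (f '' Set.Ioo K fm) f2m)
    (xmax : ℝ) (hxmax_mem : xmax ∈ Set.Icc 0 K) (hxmax_val : f xmax = fm)
    (hxmax_largest : ∀ y ∈ Set.Icc 0 K, f y = fm → y ≤ xmax)
    (f' : ℝ → ℝ)
    (hd1 : ∀ x ∈ Set.Ioi (0:ℝ), HasDerivAt f (f' x) x)
    (hd1cont : ContinuousOn f' (Set.Ioi 0))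
    (hfK : f' K < -1)
    (hf'lt : ∀ x ∈ Set.Icc xmax fm, f' x < 1)
    (α₀ : ℝ) (hα₀ : α₀ = (-f' K - 1) / (-f' K + 1))
    (henv : ∀ x ∈ Set.Ico xmax K,
      ((1 - α₀) * f' (G f α₀ x) + α₀) * ((1 - α₀) * f' x + α₀) < 1)
    (α : ℝ) (hα : α ∈ Set.Ioo α₀ 1)
    (x : ℕ → ℝ) (hx0 : 0 < x 0)
    (hrec : ∀ n, x (n + 1) = (1 - α) * f (x n) + α * x n) :
    Tendsto x atTop (nhds K) := by
  have hα₀pos : 0 < α₀ := by rw [hα₀]; apply div_pos <;> linarith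
  have hα₀1 : α₀ < 1 := hα.1.trans hα.2
  have hα0 : 0 < α := hα₀pos.trans hα.1
  have hα1 := hα.2
  have hcA : ∀ y, 0 < y → ContinuousAt f y := fun y hy => (hd1 y hy).continuousAt
  -- f K = K
  have fK : f K = K := by
    have hc := hcA K hK
    apply le_antisymm
    · refine le_of_tendsto_of_tendsto (hc.tendsto.mono_left nhdsWithin_le_nhds)
        (tendsto_id.mono_left nhdsWithin_le_nhds : Tendsto id (nhdsWithin K (Set.Ioi K)) (nhds K)) ?_
      filter_upwards [self_mem_nhdsWithin] with y hy
      exact (habove y hy).2.le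
    · refine le_of_tendsto_of_tendsto
        (tendsto_id.mono_left nhdsWithin_le_nhds : Tendsto id (nhdsWithin K (Set.Iio K)) (nhds K))
        (hc.tendsto.mono_left nhdsWithin_le_nhds) ?_
      filter_upwards [Ioo_mem_nhdsLT hK] with y hy
      exact (hbelow y hy).le
  have hxm0 : 0 < xmax := by
    rcases eq_or_lt_of_le hxmax_mem.1 with h | h
    · rw [← h, hf0] at hxmax_val; linarith
    · exact h
  have hxmK : xmax < K := by
    rcases eq_or_lt_of_le hxmax_mem.2 with h | h
    · rw [h, fK] at hxmax_val; linarith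
    · exact h
  have hle : ∀ y ∈ Set.Icc 0 K, f y ≤ fm := fun y hy => hfm.2 ⟨y, hy, rfl⟩
  -- h decreasing
  have hanti : StrictAntiOn (fun y => f y - y) (Set.Icc xmax fm) := by
    have hd : ∀ y ∈ Set.Icc xmax fm, HasDerivAt (fun y => f y - y) (f' y - 1) y := fun y hy =>
      (hd1 y (lt_of_lt_of_le hxm0 hy.1)).sub (hasDerivAt_id y)
    refine strictAntiOn_of_deriv_neg (convex_Icc _ _)
      (fun y hy => (hd y hy).continuousAt.continuousWithinAt) ?_
    intro y hy
    have hy' := interior_subset hy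
    rw [(hd y hy').deriv]
    linarith [hf'lt y hy']
  have hGd : ∀ y, 0 < y → HasDerivAt (G f α₀) ((1 - α₀) * f' y + α₀) y := by
    intro y hy
    have := ((hd1 y hy).const_mul (1 - α₀)).add ((hasDerivAt_id y).const_mul α₀)
    rw [mul_one] at this
    exact this
  have hGK : G f α₀ K = K := by unfold G; rw [fK]; ring
  have hGpos : ∀ y, 0 < y → 0 < G f α₀ y := by
    intro y hy
    unfold G
    have := mul_nonneg (sub_nonneg.2 hα₀1.le) (hf_nonneg y hy.le)
    have := mul_pos hα₀pos hy
    linarith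
  have hG2 : ∀ y ∈ Set.Ico xmax K, y < G f α₀ (G f α₀ y) := by
    have hd : ∀ y ∈ Set.Icc xmax K, HasDerivAt (fun y => G f α₀ (G f α₀ y) - y)
        (((1 - α₀) * f' (G f α₀ y) + α₀) * ((1 - α₀) * f' y + α₀) - 1) y := fun y hy => by
      have hy0 : 0 < y := lt_of_lt_of_le hxm0 hy.1
      exact ((hGd _ (hGpos y hy0)).comp y (hGd y hy0)).sub (hasDerivAt_id y)
    have hA : StrictAntiOn (fun y => G f α₀ (G f α₀ y) - y) (Set.Icc xmax K) := by
      refine strictAntiOn_of_deriv_neg (convex_Icc _ _)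
        (fun y hy => (hd y hy).continuousAt.continuousWithinAt) ?_
      intro y hy
      rw [(hd y (interior_subset hy)).deriv]
      rw [interior_Icc] at hy
      linarith [henv y ⟨hy.1.le, hy.2⟩]
    intro y hy
    have := hA ⟨hy.1, hy.2.le⟩ ⟨hxmK.le, le_refl K⟩ hy.2
    simp only [hGK] at this
    linarith
  have hα' : 0 < 1 - α := by linarith
  have hg2 : ∀ y ∈ Set.Ico xmax K, y < G f α (G f α y) := by
    intro y hy
    have hy0 : 0 < y := lt_of_lt_of_le hxm0 hy.1
    have hb := hbelow y ⟨hy0, hy.2⟩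
    have hf := hle y ⟨hy0.le, hy.2.le⟩
    have h1 := hG2 y hy
    have e : ∀ β z, G f β z = z + (1 - β) * (f z - z) := fun β z => by unfold G; ring
    have hlt : G f α y ≤ G f α₀ y := by
      rw [e, e]; nlinarith [hα.1]
    have hyg : y ≤ G f α y := by rw [e]; nlinarith
    have hgm : G f α₀ y ≤ fm := by
      rw [e]; nlinarith
    have h2 := hanti.antitoneOn ⟨hy.1.trans hyg, hlt.trans hgm⟩
      ⟨hy.1.trans (hyg.trans hlt), hgm⟩ hlt
    rw [e α₀ (G f α₀ y)] at h1
    rw [e α (G f α y)]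
    have e1 := e α₀ y
    have e2 := e α y
    have h3 : 0 < (1 - α₀) * ((f y - y) + (f (G f α₀ y) - G f α₀ y)) := by linarith
    have h4 : 0 < (f y - y) + (f (G f α₀ y) - G f α₀ y) :=
      pos_of_mul_pos_right h3 (by linarith)
    have h5 : 0 < (1 - α) * ((f y - y) + (f (G f α y) - G f α y)) :=
      mul_pos hα' (by linarith)
    linarith
  have hgK : G f α K = K := by unfold G; rw [fK]; ring
  have hgc : ContinuousOn (G f α) (Set.Ioi 0) := by
    intro y hy
    have h : ContinuousAt (fun y => (1 - α) * f y + α * y) y :=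
      (continuousAt_const.mul (hcA y hy)).add (continuousAt_const.mul continuousAt_id)
    exact h.continuousWithinAt
  have hgb : ∀ y ∈ Set.Ioo 0 K, y < G f α y := by
    intro y hy
    have := hbelow y hy
    unfold G
    nlinarith
  refine conv_aux_s19 (G f α) K fm hgc hK hgK hgb ?_ ?_ ?_ x hx0 hrec
  · intro y hy
    have := habove y hy
    unfold G
    constructor
    · have := mul_pos hα' this.1
      have := mul_pos hα0 (hK.trans hy)
      linarith
    · nlinarith
  · intro y hy
    rcases le_or_gt xmax y with h | h
    · exact hg2 y ⟨h, hy.2⟩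
    have h0 := hgb y hy
    rcases lt_trichotomy (G f α y) K with h1 | h1 | h1
    · exact h0.trans (hgb _ ⟨hy.1.trans h0, h1⟩)
    · rw [h1, hgK]; exact hy.2
    · have hm : G f α y ≤ G f α xmax := by
        unfold G
        rw [hxmax_val]
        have := hle y ⟨hy.1.le, hy.2.le⟩
        nlinarith
      obtain ⟨z, hz, hzp⟩ := intermediate_value_Icc' hxmK.le
        (hgc.mono (fun y hy => lt_of_lt_of_le hxm0 hy.1))
        (⟨by rw [hgK]; exact h1.le, hm⟩ : G f α y ∈ Set.Icc (G f α K) (G f α xmax))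
      have hzK : z < K := lt_of_le_of_ne hz.2 (fun h => by rw [h, hgK] at hzp; linarith)
      have := hg2 z ⟨hz.1, hzK⟩
      rw [hzp] at this
      linarith [hz.1]
  · intro y hy
    have := hle y ⟨hy.1.le, hy.2.le⟩
    have := hy.2
    unfold G
    nlinarith
end
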